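/- arXiv:math/0408181 — 4 statements merged into one kernel-verified Lean document; each statement's English description precedes it below -/
import Mathlib

section
/- Let k be a field and let m ≤ n be positive integers with m ≥ 3, n ≥ 6 and (m, n) ≠ (3, 6). Then the submodule category S_m(k[T]/T^n) is representation infinite: there exist infinitely many pairwise non-isomorphic indecomposable objects of S_m(k[T]/T^n). -/
open Polynomial

noncomputable section

/-- An object of the submodule category `Sₘ(k[T]/Tⁿ)`: a pair `(A, B)` where `B` is a
finite-dimensional module over `R = k[X]/(Xⁿ)` — encoded as a finite `k[X]`-module
annihilated by `Xⁿ` — together with an `R`-submodule `A ⊆ B` with `Xᵐ • A = 0`. -/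
structure SPair (k : Type) [Field k] (m n : ℕ) : Type 1 where
  B : Type
  [addCommGroup : AddCommGroup B]
  [module : Module (Polynomial k) B]
  [finite : Module.Finite (Polynomial k) B]
  bound : ∀ b : B, (X : Polynomial k) ^ n • b = 0
  A : Submodule (Polynomial k) B
  subBound : ∀ a ∈ A, (X : Polynomial k) ^ m • a = 0

attribute [instance] SPair.addCommGroup SPair.module SPair.finite

namespace SPair

variable {k : Type} [Field k] {m n : ℕ}

/-- Isomorphism of pairs: an `R`-linear isomorphism of the ambient modules mapping the one
submodule onto the other. -/
def Iso (M N : SPair k m n) : Prop :=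
  ∃ e : M.B ≃ₗ[Polynomial k] N.B, M.A.map e.toLinearMap = N.A

/-- A pair `(A, B)` is indecomposable if `B ≠ 0` and for every internal direct sum
decomposition `B = B₁ ⊕ B₂` with `A = (A ∩ B₁) ⊕ (A ∩ B₂)`, one of `B₁`, `B₂` is zero. -/
def Indec (M : SPair k m n) : Prop :=
  (∃ b : M.B, b ≠ 0) ∧
    ∀ B₁ B₂ : Submodule (Polynomial k) M.B,
      B₁ ⊓ B₂ = ⊥ → B₁ ⊔ B₂ = ⊤ → M.A = M.A ⊓ B₁ ⊔ M.A ⊓ B₂ → B₁ = ⊥ ∨ B₂ = ⊥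

end SPair

/-!
Take `B = ⨁ c, V[X] ⧸ (X ^ a c)` with pairwise distinct lengths `a c`. On the socle, an
endomorphism `E` of `B` is block triangular with respect to the lengths, and its diagonal blocks
are operators on `V`; so `E` is injective as soon as these blocks are. For the lengths `6, 4, 2`
when `m ≥ 4`, and `7, 6, 4, 3, 1` when `n ≥ 7`, and any operator `J` on `V`, there is a submodule
`A` killed by `X ^ m` such that all diagonal blocks of an endomorphism of `(A, B)` are one and the
same operator, which commutes with `J`. If `J` is a nilpotent Jordan block, then for every `α` in
its commutant `α` or `1 - α` is injective, by the same triangularity with one chain. Hence an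
idempotent endomorphism of `(A, B)` is `0` or `1`, and `(A, B)` is indecomposable; the size of `J`
is determined by the dimension of `B`.
-/

lemma ker_eq_bot_of_commute_of_isNilpotent {R M : Type*} [Ring R] [AddCommGroup M] [Module R M]
    {E N : Module.End R M} (hEN : Commute E N) (hN : IsNilpotent N)
    (hdisj : Disjoint (LinearMap.ker E) (LinearMap.ker N)) : LinearMap.ker E = ⊥ := by
  obtain ⟨n, hn⟩ := hN
  have eq_zero_of_pow : ∀ j x, E x = 0 → (N ^ j) x = 0 → x = 0 := by
    intro j
    induction j with
    | zero => exact fun x _ hx => hx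
    | succ j ih =>
      intro x hEx hx
      rw [pow_succ, Module.End.mul_apply] at hx
      have hENx : E (N x) = 0 := by
        rw [← Module.End.mul_apply, hEN.eq, Module.End.mul_apply, hEx, map_zero]
      exact Submodule.disjoint_def.mp hdisj x hEx (ih (N x) hENx hx)
  exact LinearMap.ker_eq_bot'.mpr fun x hx =>
    eq_zero_of_pow n x hx (by rw [hn, LinearMap.zero_apply])

lemma aeval_eq_zero_or_eq_one_of_isIdempotentElem {R W : Type*} [CommRing R] [AddCommGroup W]
    [Module R W] {N : Module.End R W} {A : Submodule R W} (hAN : A ∈ N.invtSubmodule)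
    (h : ∀ E : Module.End R W, IsIdempotentElem E → Commute E N → A ∈ E.invtSubmodule →
      E = 0 ∨ E = 1)
    {e : Module.End R[X] (Module.AEval' N)} (he : IsIdempotentElem e)
    (heA : Module.AEval.mapSubmodule R W N ⟨A, hAN⟩ ∈ e.invtSubmodule) : e = 0 ∨ e = 1 := by
  let φ := Module.AEval'.of N
  let E : Module.End R W := φ.symm.conj (e.restrictScalars R)
  have hφE (w : W) : φ (E w) = e (φ w) := by simp [E, LinearEquiv.conj_apply]
  have hid : IsIdempotentElem E := LinearMap.ext fun w => φ.injective <| by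
    rw [Module.End.mul_apply, hφE, hφE]
    exact LinearMap.congr_fun he (φ w)
  have hEN : Commute E N := LinearMap.ext fun w => φ.injective <| by
    rw [Module.End.mul_apply, Module.End.mul_apply, hφE, ← Module.AEval'.X_smul_of,
      ← Module.AEval'.X_smul_of, map_smul, hφE]
  have hEA : A ∈ E.invtSubmodule := fun w hw => by
    have hφw : e (φ w) ∈ Module.AEval.mapSubmodule R W N ⟨A, hAN⟩ :=
      heA ((Module.AEval.mem_mapSubmodule_apply R W N).mpr hw)
    rw [← hφE] at hφw
    exact (Module.AEval.mem_mapSubmodule_apply R W N).mp hφw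
  refine (h E hid hEN hEA).imp (fun h0 => ?_) (fun h1 => ?_) <;>
    refine LinearMap.ext fun b => ?_ <;>
    obtain ⟨w, rfl⟩ := φ.surjective b
  · rw [← hφE, h0, LinearMap.zero_apply, map_zero, LinearMap.zero_apply]
  · rw [← hφE, h1, Module.End.one_apply, Module.End.one_apply]

/-- The direct sum of Jordan chains with coefficients in `V`: an element assigns to each chain
`c` of length `a c` its coefficients in positions `0, …, a c - 1`, so that `JordanSum a V` stands
for `⨁ c, V[X] ⧸ (X ^ a c)`. -/
abbrev JordanSum {ι : Type*} (a : ι → ℕ) (V : Type*) : Type _ := (c : ι) → Fin (a c) → V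

namespace JordanSum

section Coefficients

variable (R : Type*) {ι V : Type*} [Ring R] {a : ι → ℕ} [AddCommGroup V] [Module R V]

/-- The coefficient of `X ^ p` in the chain `c`; it is `0` beyond the end of the chain. -/
def coeff (c : ι) (p : ℕ) : JordanSum a V →ₗ[R] V :=
  if h : p < a c then LinearMap.proj ⟨p, h⟩ ∘ₗ LinearMap.proj c else 0

/-- The element `v X ^ q` of the chain `c`; it is `0` beyond the end of the chain. -/
def monomial [DecidableEq ι] (c : ι) (q : ℕ) : V →ₗ[R] JordanSum a V :=
  LinearMap.pi fun d => LinearMap.pi fun p => if d = c ∧ (p : ℕ) = q then LinearMap.id else 0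

/-- Multiplication by `X`. -/
def shift : Module.End R (JordanSum a V) :=
  LinearMap.pi fun c => LinearMap.pi fun p => if (p : ℕ) = 0 then 0 else coeff R c (p - 1)

variable {R}

lemma coeff_of_lt {c : ι} {p : ℕ} (h : p < a c) (f : JordanSum a V) :
    coeff R c p f = f c ⟨p, h⟩ := by
  simp [coeff, h]

lemma coeff_eq_zero_of_le {c : ι} {p : ℕ} (h : a c ≤ p) (f : JordanSum a V) :
    coeff R c p f = 0 := by
  simp [coeff, h.not_gt]

variable (R) in
lemma ext_coeff {f g : JordanSum a V}
    (h : ∀ c, ∀ p < a c, coeff R c p f = coeff R c p g) : f = g := by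
  ext c p
  simpa only [coeff_of_lt p.2] using h c p p.2

lemma coeff_zero_shift (c : ι) (f : JordanSum a V) : coeff R c 0 (shift R f) = 0 := by
  by_cases h : 0 < a c
  · simp [coeff_of_lt h, shift]
  · exact coeff_eq_zero_of_le (not_lt.mp h) _

lemma coeff_succ_shift {c : ι} {p : ℕ} (h : p + 1 < a c) (f : JordanSum a V) :
    coeff R c (p + 1) (shift R f) = coeff R c p f := by
  simp [coeff_of_lt h, shift]

lemma coeff_shift_pow_of_lt {c : ι} {p q : ℕ} (h : p < q) (f : JordanSum a V) :
    coeff R c p ((shift R ^ q) f) = 0 := by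
  induction q generalizing p with
  | zero => exact absurd h p.not_lt_zero
  | succ q ih =>
    rw [pow_succ', Module.End.mul_apply]
    rcases p with _ | p
    · exact coeff_zero_shift c _
    by_cases hp : p + 1 < a c
    · rw [coeff_succ_shift hp, ih (by omega)]
    · exact coeff_eq_zero_of_le (not_lt.mp hp) _

lemma coeff_add_shift_pow {c : ι} {p q : ℕ} (h : p + q < a c) (f : JordanSum a V) :
    coeff R c (p + q) ((shift R ^ q) f) = coeff R c p f := by
  induction q with
  | zero => simp
  | succ q ih =>
    rw [pow_succ', Module.End.mul_apply]
    exact (coeff_succ_shift h _).trans (ih (by omega))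

lemma shift_pow_eq_zero {n : ℕ} (h : ∀ c, a c ≤ n) :
    (shift R : Module.End R (JordanSum a V)) ^ n = 0 :=
  LinearMap.ext fun f => ext_coeff R fun c p hp => by
    rw [coeff_shift_pow_of_lt (hp.trans_le (h c)), LinearMap.zero_apply, map_zero]

variable [DecidableEq ι]

lemma coeff_monomial_self {c : ι} {p : ℕ} (h : p < a c) (v : V) :
    coeff R c p (monomial R c p v : JordanSum a V) = v := by
  simp [coeff_of_lt h, monomial]

lemma coeff_monomial_of_ne {c d : ι} {p q : ℕ} (h : ¬(c = d ∧ p = q)) (v : V) :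
    coeff R c p (monomial R d q v : JordanSum a V) = 0 := by
  by_cases hp : p < a c
  · simp [coeff_of_lt hp, monomial, h]
  · exact coeff_eq_zero_of_le (not_lt.mp hp) _

lemma shift_monomial (c : ι) (q : ℕ) (v : V) :
    shift R (monomial R c q v : JordanSum a V) = monomial R c (q + 1) v := by
  refine ext_coeff R fun d p hp => ?_
  rcases p with _ | p
  · rw [coeff_zero_shift, coeff_monomial_of_ne (by omega)]
  rw [coeff_succ_shift hp]
  by_cases h : d = c ∧ p = q
  · obtain ⟨rfl, rfl⟩ := h
    rw [coeff_monomial_self hp, coeff_monomial_self (by omega)]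
  · rw [coeff_monomial_of_ne h, coeff_monomial_of_ne (by simpa using h)]

lemma shift_pow_monomial (c : ι) (q t : ℕ) (v : V) :
    (shift R ^ t) (monomial R c q v : JordanSum a V) = monomial R c (q + t) v := by
  induction t with
  | zero => simp
  | succ t ih => rw [pow_succ', Module.End.mul_apply, ih, shift_monomial, add_assoc]

lemma monomial_eq_zero_of_le {c : ι} {q : ℕ} (h : a c ≤ q) (v : V) :
    (monomial R c q v : JordanSum a V) = 0 :=
  ext_coeff R fun d p hp => by
    rw [map_zero, coeff_monomial_of_ne]
    rintro ⟨rfl, rfl⟩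
    exact h.not_gt hp

lemma eq_sum_monomial_of_shift_eq_zero [Fintype ι] {u : JordanSum a V} (hu : shift R u = 0) :
    u = ∑ c, monomial R c (a c - 1) (coeff R c (a c - 1) u) := by
  refine ext_coeff R fun c p hp => ?_
  rw [map_sum, Finset.sum_eq_single c
    (fun d _ hd => coeff_monomial_of_ne (fun h => hd h.1.symm) _) (by simp)]
  by_cases h : p = a c - 1
  · rw [h, coeff_monomial_self (by omega)]
  · rw [coeff_monomial_of_ne (by omega), ← coeff_succ_shift (by omega), hu, map_zero]

end Coefficients

section Endomorphisms

variable {R ι V : Type*} [Ring R] {a : ι → ℕ} [AddCommGroup V] [Module R V]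

lemma map_shift_pow {E : Module.End R (JordanSum a V)} (hE : Commute E (shift R)) (q : ℕ)
    (f : JordanSum a V) : E ((shift R ^ q) f) = (shift R ^ q) (E f) :=
  LinearMap.congr_fun (hE.pow_right q).eq f

variable [DecidableEq ι]

/-- The operator on `V` by which an endomorphism `E` acts on the head of the chain `c`, that is,
the diagonal entry of `E` at `c` modulo `X`. -/
def diag (E : Module.End R (JordanSum a V)) (c : ι) : Module.End R V :=
  coeff R c 0 ∘ₗ E ∘ₗ monomial R c 0

lemma diag_one_sub (E : Module.End R (JordanSum a V)) {c : ι} (hc : 0 < a c) :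
    diag (1 - E) c = 1 - diag E c :=
  LinearMap.ext fun v => by simp [diag, coeff_monomial_self hc]

variable {E : Module.End R (JordanSum a V)}

lemma coeff_map_monomial_add (hE : Commute E (shift R)) {c d : ι} {p q t : ℕ} (h : p + t < a c)
    (v : V) :
    coeff R c (p + t) (E (monomial R d (q + t) v)) = coeff R c p (E (monomial R d q v)) := by
  rw [← shift_pow_monomial, map_shift_pow hE, coeff_add_shift_pow h]

lemma coeff_map_monomial_self (hE : Commute E (shift R)) {c : ι} {p : ℕ} (h : p < a c) (v : V) :
    coeff R c p (E (monomial R c p v)) = diag E c v := by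
  have := coeff_map_monomial_add hE (c := c) (d := c) (p := 0) (q := 0) (t := p) (by omega) v
  rwa [zero_add] at this

lemma coeff_map_monomial_of_lt (hE : Commute E (shift R)) {c d : ι} {p q : ℕ} (h : p < q)
    (v : V) : coeff R c p (E (monomial R d q v)) = 0 := by
  rw [← zero_add q, ← shift_pow_monomial, map_shift_pow hE, coeff_shift_pow_of_lt h]

/- `X ^ (a d - q)` kills `v X ^ q` in the chain `d`, hence also its image. -/
lemma coeff_map_monomial_of_add_lt (hE : Commute E (shift R)) {c d : ι} {p q : ℕ}
    (h : p + a d < a c + q) (v : V) : coeff R c p (E (monomial R d q v)) = 0 := by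
  by_cases hp : p + (a d - q) < a c
  · rw [← coeff_map_monomial_add hE hp, monomial_eq_zero_of_le (by omega), map_zero, map_zero]
  · rw [monomial_eq_zero_of_le (by omega), map_zero, map_zero]

section Idempotents

variable [Finite ι]

/- On the socle `⨁ c, V X ^ (a c - 1)`, and with the chains ordered by length, `E` is block
triangular with diagonal blocks `diag E c`. -/
theorem ker_eq_bot_of_ker_diag_eq_bot (hinj : Function.Injective a) (hE : Commute E (shift R))
    (hd : ∀ c, LinearMap.ker (diag E c) = ⊥) : LinearMap.ker E = ⊥ := by
  have := Fintype.ofFinite ι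
  have hnil : IsNilpotent (shift R : Module.End R (JordanSum a V)) :=
    ⟨_, shift_pow_eq_zero fun c => Finset.le_sup (f := a) (Finset.mem_univ c)⟩
  refine ker_eq_bot_of_commute_of_isNilpotent hE hnil (Submodule.disjoint_def.mpr ?_)
  intro u (hEu : E u = 0) (hu : shift R u = 0)
  have hsum := eq_sum_monomial_of_shift_eq_zero hu
  have hcoeff : ∀ c, coeff R c (a c - 1) u = 0 := by
    intro c
    induction c using (measure a).wf.induction with | _ c ih => ?_
    rcases (a c).eq_zero_or_pos with hc | hc
    · exact coeff_eq_zero_of_le (by omega) u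
    have hEuc : coeff R c (a c - 1) (E u) = 0 := by rw [hEu, map_zero]
    rw [hsum, map_sum, map_sum, Finset.sum_eq_single c ?_ (by simp),
      coeff_map_monomial_self hE (by omega)] at hEuc
    · exact LinearMap.ker_eq_bot'.mp (hd c) _ hEuc
    · intro d _ hdc
      rcases (hinj.ne hdc).lt_or_gt with hlt | hgt
      · rw [ih d hlt, map_zero, map_zero, map_zero]
      · exact coeff_map_monomial_of_lt hE (by omega) _
  rw [hsum]
  exact Finset.sum_eq_zero fun c _ => by rw [hcoeff c, map_zero]

lemma eq_one_of_isIdempotentElem_of_ker_diag_eq_bot (hinj : Function.Injective a)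
    (hE : Commute E (shift R)) (hid : IsIdempotentElem E)
    (hd : ∀ c, LinearMap.ker (diag E c) = ⊥) : E = 1 :=
  LinearMap.ext fun f => LinearMap.ker_eq_bot.mp (ker_eq_bot_of_ker_diag_eq_bot hinj hE hd)
    (LinearMap.congr_fun hid f)

lemma eq_zero_or_eq_one_of_isIdempotentElem (hinj : Function.Injective a) (hpos : ∀ c, 0 < a c)
    (hE : Commute E (shift R)) (hid : IsIdempotentElem E) {α : Module.End R V}
    (hα : LinearMap.ker α = ⊥ ∨ LinearMap.ker (1 - α) = ⊥) (hd : ∀ c, diag E c = α) :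
    E = 0 ∨ E = 1 := by
  rcases hα with h | h
  · exact .inr <| eq_one_of_isIdempotentElem_of_ker_diag_eq_bot hinj hE hid
      fun c => by rw [hd c, h]
  · have : 1 - E = 1 := eq_one_of_isIdempotentElem_of_ker_diag_eq_bot hinj
      ((Commute.one_left _).sub_left hE) hid.one_sub
      fun c => by rw [diag_one_sub E (hpos c), hd c, h]
    exact .inl (sub_eq_self.mp this)

end Idempotents

end Endomorphisms

lemma ker_eq_bot_or_ker_one_sub_eq_bot_of_unique {R ι V : Type*} [Ring R] [Unique ι]
    {a : ι → ℕ} [AddCommGroup V] [Module R V] [IsSimpleModule R V] (hpos : 0 < a default)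
    {E : Module.End R (JordanSum a V)} (hE : Commute E (shift R)) :
    LinearMap.ker E = ⊥ ∨ LinearMap.ker (1 - E) = ⊥ := by
  classical
  have hinj : Function.Injective a := Function.injective_of_subsingleton a
  rcases (diag E default).injective_or_eq_zero with h | h
  · exact .inl <| ker_eq_bot_of_ker_diag_eq_bot hinj hE <|
      Unique.forall_iff.mpr (LinearMap.ker_eq_bot.mpr h)
  · refine .inr <| ker_eq_bot_of_ker_diag_eq_bot hinj ((Commute.one_left _).sub_left hE) <|
      Unique.forall_iff.mpr ?_
    rw [diag_one_sub E hpos, h, sub_zero]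
    exact LinearMap.ker_id

lemma nontrivial {ι V : Type*} [h : Nonempty ι] [Nontrivial V] {a : ι → ℕ} (hpos : ∀ c, 0 < a c) :
    Nontrivial (JordanSum a V) :=
  have (c : ι) : NeZero (a c) := ⟨(hpos c).ne'⟩
  h.elim fun c => Pi.nontrivial_at c

lemma finrank_eq {R ι V : Type*} [Ring R] [StrongRankCondition R] [Fintype ι] (a : ι → ℕ)
    [AddCommGroup V] [Module R V] [Module.Free R V] [Module.Finite R V] :
    Module.finrank R (JordanSum a V) = (∑ c, a c) * Module.finrank R V := by
  simp [Module.finrank_pi_fintype, Finset.sum_mul]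

end JordanSum

namespace SPair

variable {k : Type} [Field k] {m n : ℕ}

lemma indec_of_forall_isIdempotentElem (M : SPair k m n) [Nontrivial M.B]
    (h : ∀ e : Module.End k[X] M.B, IsIdempotentElem e → M.A ∈ e.invtSubmodule →
      e = 0 ∨ e = 1) : M.Indec := by
  refine ⟨exists_ne 0, fun B₁ B₂ hinf hsup hA => ?_⟩
  have hc : IsCompl B₁ B₂ := ⟨disjoint_iff.mpr hinf, codisjoint_iff.mpr hsup⟩
  have hinv : M.A ∈ Module.End.invtSubmodule (B₁.projection B₂ hc) := by
    intro x hx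
    rw [hA] at hx
    obtain ⟨y, ⟨hyA, hy⟩, z, ⟨-, hz⟩, rfl⟩ := Submodule.mem_sup.mp hx
    rw [Submodule.mem_comap, map_add, Submodule.projection_apply_of_mem_left hc hy,
      (Submodule.projection_apply_eq_zero_iff hc).mpr hz, add_zero]
    exact hyA
  rcases h _ (Submodule.isIdempotentElem_projection hc) hinv with h0 | h1
  · left
    rw [← Submodule.range_projection hc, h0, LinearMap.range_zero]
  · right
    rw [← Submodule.ker_projection hc, h1]
    exact LinearMap.ker_id

variable {W : Type} [AddCommGroup W] [Module k W] [Module.Finite k W]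

/-- The pair given by a vector space `W` on which `X` acts as the nilpotent operator `N`, together
with an `N`-invariant subspace `A`. -/
def ofEnd (N : Module.End k W) (hn : N ^ n = 0) (A : Submodule k W) (hAN : A ∈ N.invtSubmodule)
    (hm : A ≤ LinearMap.ker (N ^ m)) : SPair k m n where
  B := Module.AEval' N
  bound b := by
    obtain ⟨w, rfl⟩ := (Module.AEval'.of N).surjective b
    rw [Module.AEval'.X_pow_smul_of, hn, zero_smul, map_zero]
  A := Module.AEval.mapSubmodule k W N ⟨A, hAN⟩
  subBound b hb := by
    obtain ⟨w, rfl⟩ := (Module.AEval'.of N).surjective b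
    have hw : (N ^ m) w = 0 := hm (by simpa using hb)
    rw [Module.AEval'.X_pow_smul_of, Module.End.smul_def, hw, map_zero]

lemma ofEnd_indec [Nontrivial W] {N : Module.End k W} {hn : N ^ n = 0} {A : Submodule k W}
    {hAN : A ∈ N.invtSubmodule} {hm : A ≤ LinearMap.ker (N ^ m)}
    (h : ∀ E : Module.End k W, IsIdempotentElem E → Commute E N → A ∈ E.invtSubmodule →
      E = 0 ∨ E = 1) : (ofEnd N hn A hAN hm).Indec :=
  have : Nontrivial (ofEnd N hn A hAN hm).B := (Module.AEval'.of N).symm.toEquiv.nontrivial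
  indec_of_forall_isIdempotentElem _ fun _ he heA =>
    aeval_eq_zero_or_eq_one_of_isIdempotentElem hAN h he heA

lemma finrank_eq_of_ofEnd_iso {W' : Type} [AddCommGroup W'] [Module k W'] [Module.Finite k W']
    {N : Module.End k W} {hn : N ^ n = 0} {A : Submodule k W}
    {hAN : A ∈ N.invtSubmodule} {hm : A ≤ LinearMap.ker (N ^ m)}
    {N' : Module.End k W'} {hn' : N' ^ n = 0} {A' : Submodule k W'}
    {hAN' : A' ∈ N'.invtSubmodule} {hm' : A' ≤ LinearMap.ker (N' ^ m)}
    (h : (ofEnd N hn A hAN hm).Iso (ofEnd N' hn' A' hAN' hm')) :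
    Module.finrank k W = Module.finrank k W' := by
  obtain ⟨e, -⟩ := h
  let e' : Module.AEval' N ≃ₗ[k[X]] Module.AEval' N' := e
  exact (Module.AEval'.of N ≪≫ₗ e'.restrictScalars k ≪≫ₗ (Module.AEval'.of N').symm).finrank_eq

end SPair

namespace JordanSum

section Subspaces

variable {R ι V : Type*} [Ring R] {a : ι → ℕ} [AddCommGroup V] [Module R V]

variable (R) in
/-- The elements in which every chain `c` is divisible by `X ^ ℓ c`. -/
def orderGE (ℓ : ι → ℕ) : Submodule R (JordanSum a V) :=
  ⨅ (c) (p) (_ : p < ℓ c), LinearMap.ker (coeff R c p)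

lemma mem_orderGE {ℓ : ι → ℕ} {f : JordanSum a V} :
    f ∈ orderGE R ℓ ↔ ∀ c, ∀ p < ℓ c, coeff R c p f = 0 := by
  simp [orderGE]

lemma shift_mem_orderGE {ℓ : ι → ℕ} {f : JordanSum a V} (hf : f ∈ orderGE R ℓ) :
    shift R f ∈ orderGE R ℓ := by
  refine mem_orderGE.mpr fun c p hp => ?_
  rcases p with _ | p
  · exact coeff_zero_shift c f
  by_cases h : p + 1 < a c
  · rw [coeff_succ_shift h, mem_orderGE.mp hf c p (by omega)]
  · exact coeff_eq_zero_of_le (not_lt.mp h) _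

lemma orderGE_le_ker_shift_pow {ℓ : ι → ℕ} {m : ℕ} (h : ∀ c, a c ≤ ℓ c + m) :
    orderGE R ℓ ≤ LinearMap.ker ((shift R : Module.End R (JordanSum a V)) ^ m) := by
  refine fun f hf => LinearMap.mem_ker.mpr <| ext_coeff R fun c p hp => ?_
  rw [map_zero]
  rcases lt_or_ge p m with hpm | hmp
  · exact coeff_shift_pow_of_lt hpm f
  · obtain ⟨q, rfl⟩ := Nat.exists_eq_add_of_le' hmp
    rw [coeff_add_shift_pow hp, mem_orderGE.mp hf c q (by have := h c; omega)]

variable [DecidableEq ι]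

lemma monomial_mem_orderGE {ℓ : ι → ℕ} {c : ι} {q : ℕ} (h : ℓ c ≤ q) (v : V) :
    (monomial R c q v : JordanSum a V) ∈ orderGE R ℓ :=
  mem_orderGE.mpr fun d p hp => coeff_monomial_of_ne (by rintro ⟨rfl, rfl⟩; omega) v

/-- Every endomorphism of the pair `(A, JordanSum a V)` acts on the heads of all chains by one and
the same operator on `V`, and this operator commutes with `J`. -/
def HasDiagInCommutant (A : Submodule R (JordanSum a V)) (J : Module.End R V) : Prop :=
  ∀ E : Module.End R (JordanSum a V), Commute E (shift R) → A ∈ E.invtSubmodule →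
    ∃ α : Module.End R V, Commute α J ∧ ∀ c, diag E c = α

end Subspaces

section FourSix

variable {R V : Type*} [Ring R] [AddCommGroup V] [Module R V] (J : Module.End R V)

/-- The submodule for `S₄(k[T]/T⁶)`: writing `x, y, z` for the heads of the chains of lengths
`6, 4, 2`, it is generated by `X²xv + Xyv + zv` and `X²yv + Xz(Jv)` for `v : V`. -/
def fourSix : Submodule R (JordanSum ![6, 4, 2] V) :=
  orderGE R ![2, 1, 0] ⊓ LinearMap.eqLocus (coeff R 1 1) (coeff R 0 2) ⊓
    LinearMap.eqLocus (coeff R 2 0) (coeff R 0 2) ⊓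
    LinearMap.eqLocus (coeff R 2 1) (coeff R 0 3 + J ∘ₗ (coeff R 1 2 - coeff R 0 3))

variable {J}

lemma mem_fourSix {f : JordanSum ![6, 4, 2] V} :
    f ∈ fourSix J ↔ f ∈ orderGE R ![2, 1, 0] ∧ coeff R 1 1 f = coeff R 0 2 f ∧
      coeff R 2 0 f = coeff R 0 2 f ∧
      coeff R 2 1 f = coeff R 0 3 f + J (coeff R 1 2 f - coeff R 0 3 f) := by
  simp [fourSix, and_assoc]

lemma fourSix_mem_invtSubmodule : fourSix J ∈ (shift R).invtSubmodule := by
  intro f hf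
  obtain ⟨hord, h11, h20, -⟩ := mem_fourSix.mp hf
  have h0 := mem_orderGE.mp hord
  refine mem_fourSix.mpr ⟨shift_mem_orderGE hord, ?_⟩
  simp (disch := decide) only [coeff_zero_shift, coeff_succ_shift, h0, h11, h20]
  simp

lemma fourSix_le_ker_shift_pow {m : ℕ} (hm : 4 ≤ m) :
    fourSix J ≤ LinearMap.ker (shift R ^ m) :=
  fun _ hf => orderGE_le_ker_shift_pow
    (fun c => (by decide : ∀ c, ![6, 4, 2] c ≤ ![2, 1, 0] c + 4) c |>.trans (by omega))
    (mem_fourSix.mp hf).1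

lemma diag_eq_of_fourSix_mem_invtSubmodule {E : Module.End R (JordanSum ![6, 4, 2] V)}
    (hE : Commute E (shift R)) (hA : fourSix J ∈ E.invtSubmodule) (c : Fin 3) :
    diag E c = diag E 0 := by
  have hmem (v : V) : monomial R 0 2 v + monomial R 1 1 v + monomial R 2 0 v ∈ fourSix J := by
    refine mem_fourSix.mpr ⟨?_, ?_⟩
    · exact add_mem (add_mem (monomial_mem_orderGE (by decide) v)
        (monomial_mem_orderGE (by decide) v)) (monomial_mem_orderGE (by decide) v)
    · simp (disch := decide) [coeff_monomial_self, coeff_monomial_of_ne]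
  have hcoeff (v : V) : diag E 1 v = diag E 0 v ∧ diag E 2 v = diag E 0 v := by
    obtain ⟨-, h11, h20, -⟩ := mem_fourSix.mp (hA (hmem v))
    simp (disch := decide) only [map_add, coeff_map_monomial_self hE, coeff_map_monomial_of_lt hE,
      coeff_map_monomial_of_add_lt hE, add_zero, zero_add] at h11 h20
    exact ⟨h11, h20⟩
  fin_cases c
  · rfl
  · exact LinearMap.ext fun v => (hcoeff v).1
  · exact LinearMap.ext fun v => (hcoeff v).2

lemma hasDiagInCommutant_fourSix : HasDiagInCommutant (fourSix J) J := by
  intro E hE hA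
  have hdiag := diag_eq_of_fourSix_mem_invtSubmodule hE hA
  refine ⟨diag E 0, LinearMap.ext fun v => ?_, hdiag⟩
  have hmem : monomial R 1 2 v + monomial R 2 1 (J v) ∈ fourSix J := by
    refine mem_fourSix.mpr ⟨?_, ?_⟩
    · exact add_mem (monomial_mem_orderGE (by decide) v) (monomial_mem_orderGE (by decide) _)
    · simp (disch := decide) [coeff_monomial_self, coeff_monomial_of_ne]
  obtain ⟨-, -, -, h21⟩ := mem_fourSix.mp (hA hmem)
  simp (disch := decide) only [map_add, coeff_map_monomial_self hE, coeff_map_monomial_of_lt hE,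
    coeff_map_monomial_of_add_lt hE, hdiag, add_zero, zero_add, sub_zero] at h21
  exact h21

end FourSix

section ThreeSeven

variable {R V : Type*} [Ring R] [AddCommGroup V] [Module R V] (J : Module.End R V)

/-- The submodule for `S₃(k[T]/T⁷)`: writing `x, y, z, w, u` for the heads of the chains of
lengths `7, 6, 4, 3, 1`, it is generated by `X⁴xv + X²zv + Xwv + uv`, `X³yv + Xwv + u(Jv)` and
`X²wv` for `v : V`. -/
def threeSeven : Submodule R (JordanSum ![7, 6, 4, 3, 1] V) :=
  orderGE R ![4, 3, 2, 1, 0] ⊓ LinearMap.eqLocus (coeff R 2 2) (coeff R 0 4) ⊓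
    LinearMap.eqLocus (coeff R 2 3) (coeff R 0 5) ⊓
    LinearMap.eqLocus (coeff R 3 1) (coeff R 0 4 + coeff R 1 3) ⊓
    LinearMap.eqLocus (coeff R 4 0) (coeff R 0 4 + J ∘ₗ coeff R 1 3)

variable {J}

lemma mem_threeSeven {f : JordanSum ![7, 6, 4, 3, 1] V} :
    f ∈ threeSeven J ↔ f ∈ orderGE R ![4, 3, 2, 1, 0] ∧ coeff R 2 2 f = coeff R 0 4 f ∧
      coeff R 2 3 f = coeff R 0 5 f ∧ coeff R 3 1 f = coeff R 0 4 f + coeff R 1 3 f ∧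
      coeff R 4 0 f = coeff R 0 4 f + J (coeff R 1 3 f) := by
  simp [threeSeven, and_assoc]

lemma threeSeven_mem_invtSubmodule : threeSeven J ∈ (shift R).invtSubmodule := by
  intro f hf
  obtain ⟨hord, h22, -⟩ := mem_threeSeven.mp hf
  have h0 := mem_orderGE.mp hord
  refine mem_threeSeven.mpr ⟨shift_mem_orderGE hord, ?_⟩
  simp (disch := decide) only [coeff_zero_shift, coeff_succ_shift, h0, h22]
  simp

lemma threeSeven_le_ker_shift_pow {m : ℕ} (hm : 3 ≤ m) :
    threeSeven J ≤ LinearMap.ker (shift R ^ m) :=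
  fun _ hf => orderGE_le_ker_shift_pow
    (fun c => (by decide : ∀ c, ![7, 6, 4, 3, 1] c ≤ ![4, 3, 2, 1, 0] c + 3) c |>.trans
      (by omega))
    (mem_threeSeven.mp hf).1

/- `X⁴yv` lies in `threeSeven J`, so its image has no `X⁵x` term. -/
lemma coeff_map_eq_zero_of_threeSeven_mem_invtSubmodule
    {E : Module.End R (JordanSum ![7, 6, 4, 3, 1] V)} (hE : Commute E (shift R))
    (hA : threeSeven J ∈ E.invtSubmodule) (v : V) : coeff R 0 4 (E (monomial R 1 3 v)) = 0 := by
  have hmem : monomial R 1 4 v ∈ threeSeven J := by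
    refine mem_threeSeven.mpr ⟨monomial_mem_orderGE (by decide) v, ?_⟩
    simp (disch := decide) [coeff_monomial_of_ne]
  obtain ⟨-, -, h23, -⟩ := mem_threeSeven.mp (hA hmem)
  rw [coeff_map_monomial_of_lt hE (by decide)] at h23
  rw [← coeff_map_monomial_add hE (t := 1) (by decide), ← h23]

lemma monomial_add_monomial_mem_threeSeven (v : V) :
    monomial R 1 3 v + monomial R 3 1 v + monomial R 4 0 (J v) ∈ threeSeven J := by
  refine mem_threeSeven.mpr ⟨?_, ?_⟩
  · exact add_mem (add_mem (monomial_mem_orderGE (by decide) v)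
      (monomial_mem_orderGE (by decide) v)) (monomial_mem_orderGE (by decide) _)
  · simp (disch := decide) [coeff_monomial_self, coeff_monomial_of_ne]

lemma diag_eq_of_threeSeven_mem_invtSubmodule
    {E : Module.End R (JordanSum ![7, 6, 4, 3, 1] V)} (hE : Commute E (shift R))
    (hA : threeSeven J ∈ E.invtSubmodule) (c : Fin 5) : diag E c = diag E 0 := by
  have hdiag20 (v : V) : diag E 2 v = diag E 0 v := by
    have hmem : monomial R 0 5 v + monomial R 2 3 v ∈ threeSeven J := by
      refine mem_threeSeven.mpr ⟨?_, ?_⟩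
      · exact add_mem (monomial_mem_orderGE (by decide) v) (monomial_mem_orderGE (by decide) v)
      · simp (disch := decide) [coeff_monomial_self, coeff_monomial_of_ne]
    obtain ⟨-, -, h23, -⟩ := mem_threeSeven.mp (hA hmem)
    simp (disch := decide) only [map_add, coeff_map_monomial_self hE, coeff_map_monomial_of_lt hE,
      coeff_map_monomial_of_add_lt hE, add_zero, zero_add] at h23
    exact h23
  have hdiag30_40 (v : V) : diag E 3 v = diag E 0 v ∧ diag E 4 v = diag E 0 v := by
    have hmem : monomial R 0 4 v + monomial R 2 2 v + monomial R 3 1 v + monomial R 4 0 v ∈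
        threeSeven J := by
      refine mem_threeSeven.mpr ⟨?_, ?_⟩
      · exact add_mem (add_mem (add_mem (monomial_mem_orderGE (by decide) v)
          (monomial_mem_orderGE (by decide) v)) (monomial_mem_orderGE (by decide) v))
          (monomial_mem_orderGE (by decide) v)
      · simp (disch := decide) [coeff_monomial_self, coeff_monomial_of_ne]
    obtain ⟨-, -, -, h31, h40⟩ := mem_threeSeven.mp (hA hmem)
    simp (disch := decide) only [map_add, coeff_map_monomial_self hE, coeff_map_monomial_of_lt hE,
      coeff_map_monomial_of_add_lt hE, map_zero, add_zero, zero_add] at h31 h40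
    exact ⟨h31, h40⟩
  have hdiag31 (v : V) : diag E 3 v = diag E 1 v := by
    obtain ⟨-, -, -, h31, -⟩ := mem_threeSeven.mp (hA (monomial_add_monomial_mem_threeSeven v))
    simp (disch := decide) only [map_add, coeff_map_monomial_self hE, coeff_map_monomial_of_lt hE,
      coeff_map_monomial_of_add_lt hE, add_zero, zero_add,
      coeff_map_eq_zero_of_threeSeven_mem_invtSubmodule hE hA] at h31
    exact h31
  ext v
  fin_cases c
  exacts [rfl, (hdiag31 v).symm.trans (hdiag30_40 v).1, hdiag20 v, (hdiag30_40 v).1,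
    (hdiag30_40 v).2]

lemma hasDiagInCommutant_threeSeven : HasDiagInCommutant (threeSeven J) J := by
  intro E hE hA
  have hdiag := diag_eq_of_threeSeven_mem_invtSubmodule hE hA
  refine ⟨diag E 0, LinearMap.ext fun v => ?_, hdiag⟩
  obtain ⟨-, -, -, -, h40⟩ := mem_threeSeven.mp (hA (monomial_add_monomial_mem_threeSeven v))
  simp (disch := decide) only [map_add, coeff_map_monomial_self hE, coeff_map_monomial_of_lt hE,
    coeff_map_monomial_of_add_lt hE, hdiag, add_zero, zero_add,
    coeff_map_eq_zero_of_threeSeven_mem_invtSubmodule hE hA] at h40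
  exact h40

end ThreeSeven

end JordanSum

/-- The vector space `k ^ (r + 1)`; its operator `shift k` is a single nilpotent Jordan block. -/
abbrev JordanBlock (k : Type) (r : ℕ) : Type := JordanSum (fun _ : Unit => r + 1) k

namespace SPair

open JordanSum

variable {k : Type} [Field k] {m n : ℕ}

theorem exists_pairwise_not_iso_of_hasDiagInCommutant {ι : Type} [Finite ι] [DecidableEq ι]
    [Nonempty ι] {a : ι → ℕ} (hinj : Function.Injective a) (hpos : ∀ c, 0 < a c)
    (hn : ∀ c, a c ≤ n) (A : ∀ r, Submodule k (JordanSum a (JordanBlock k r)))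
    (hAN : ∀ r, A r ∈ (shift k).invtSubmodule) (hm : ∀ r, A r ≤ LinearMap.ker (shift k ^ m))
    (hdiag : ∀ r, HasDiagInCommutant (A r) (shift k)) :
    ∃ f : ℕ → SPair k m n,
      (∀ i, (f i).Indec) ∧ ∀ i j, i ≠ j → ¬ (f i).Iso (f j) := by
  have := Fintype.ofFinite ι
  let f (r : ℕ) : SPair k m n := ofEnd (W := JordanSum a (JordanBlock k r)) (shift k)
    (shift_pow_eq_zero hn) (A r) (hAN r) (hm r)
  refine ⟨f, fun r => ?_, fun i j hij hiso => hij ?_⟩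
  · have : Nontrivial (JordanBlock k r) := JordanSum.nontrivial fun _ => r.succ_pos
    have : Nontrivial (JordanSum a (JordanBlock k r)) := JordanSum.nontrivial hpos
    refine ofEnd_indec fun E hid hE hEA => ?_
    obtain ⟨α, hα, hd⟩ := hdiag r E hE hEA
    exact eq_zero_or_eq_one_of_isIdempotentElem hinj hpos hE hid
      (ker_eq_bot_or_ker_one_sub_eq_bot_of_unique r.succ_pos hα) hd
  · have hsum : 0 < ∑ c, a c := Finset.sum_pos (fun c _ => hpos c) Finset.univ_nonempty
    have := finrank_eq_of_ofEnd_iso hiso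
    simpa [JordanSum.finrank_eq, hsum.ne'] using this

end SPair

/-- **Theorem 1.2/1.3 (representation-infinite cases).** If `m ≥ 3`, `n ≥ 6` and
`(m, n) ≠ (3, 6)`, then the category `Sₘ(k[T]/Tⁿ)` is representation infinite: there exist
infinitely many pairwise non-isomorphic indecomposable objects. -/
theorem representation_infinite (k : Type) [Field k] (m n : ℕ)
    (hm : 3 ≤ m) (hmn : m ≤ n) (hn : 6 ≤ n) (hne : ¬(m = 3 ∧ n = 6)) :
    ∃ f : ℕ → SPair k m n,
      (∀ i, (f i).Indec) ∧ ∀ i j, i ≠ j → ¬ (f i).Iso (f j) := by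
  obtain h4 | h7 : 4 ≤ m ∨ 7 ≤ n := by omega
  · have hlen : ∀ c, ![6, 4, 2] c ≤ 6 := by decide
    exact SPair.exists_pairwise_not_iso_of_hasDiagInCommutant (by decide) (by decide)
      (fun c => (hlen c).trans hn) (fun _ => JordanSum.fourSix (JordanSum.shift k))
      (fun _ => JordanSum.fourSix_mem_invtSubmodule)
      (fun _ => JordanSum.fourSix_le_ker_shift_pow h4)
      (fun _ => JordanSum.hasDiagInCommutant_fourSix)
  · have hlen : ∀ c, ![7, 6, 4, 3, 1] c ≤ 7 := by decide
    exact SPair.exists_pairwise_not_iso_of_hasDiagInCommutant (by decide) (by decide)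
      (fun c => (hlen c).trans h7) (fun _ => JordanSum.threeSeven (JordanSum.shift k))
      (fun _ => JordanSum.threeSeven_mem_invtSubmodule)
      (fun _ => JordanSum.threeSeven_le_ker_shift_pow hm)
      (fun _ => JordanSum.hasDiagInCommutant_threeSeven)

end
end

section
/- Let k be a field and n a positive integer, and set R = k[X]/(X^n). For 1 ≤ i ≤ n let B_i = k[X]/(X^i), regarded as an R-module. Then the 2n pairs (0, B_i) and (X^{i-1}·B_i, B_i) for 1 ≤ i ≤ n are indecomposable objects of S_1(k[T]/T^n), they are pairwise non-isomorphic, and every indecomposable object of S_1(k[T]/T^n) is isomorphic to one of them. In particular, S_1(k[T]/T^n) has exactly 2n isomorphism classes of indecomposable objects. -/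
open Polynomial

noncomputable section

/-- The cyclic module `k[X]/(Xⁱ)`, as a module over `k[X]`. -/
abbrev Bq (k : Type) [Field k] (i : ℕ) : Type :=
  Polynomial k ⧸ (Ideal.span {(X : Polynomial k) ^ i} : Ideal (Polynomial k))

instance (k : Type) [Field k] (i : ℕ) : Module.Finite (Polynomial k) (Bq k i) :=
  Module.Finite.of_surjective (Submodule.mkQ _) (Submodule.mkQ_surjective _)

theorem Bq_bound (k : Type) [Field k] {i n : ℕ} (h : i ≤ n) (b : Bq k i) :
    (X : Polynomial k) ^ n • b = 0 := by
  obtain ⟨p, rfl⟩ := Submodule.Quotient.mk_surjective _ b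
  rw [← Submodule.Quotient.mk_smul, Submodule.Quotient.mk_eq_zero, smul_eq_mul]
  exact Ideal.mem_span_singleton.mpr ((pow_dvd_pow X h).mul_right p)

theorem Bq_smul_mk (k : Type) [Field k] {i j r : ℕ} (h : i ≤ j + r) :
    (X : Polynomial k) ^ r • (Submodule.Quotient.mk (X ^ j) : Bq k i) = 0 := by
  rw [← Submodule.Quotient.mk_smul, Submodule.Quotient.mk_eq_zero, smul_eq_mul, ← pow_add]
  exact Ideal.mem_span_singleton.mpr (pow_dvd_pow X (by omega))

theorem span_smul_eq_zero {k : Type} [Field k] {B : Type} [AddCommGroup B]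
    [Module (Polynomial k) B] (r : Polynomial k) {S : Set B} (h : ∀ v ∈ S, r • v = 0) :
    ∀ a ∈ Submodule.span (Polynomial k) S, r • a = 0 := by
  intro a ha
  induction ha using Submodule.span_induction with
  | mem v hv => exact h v hv
  | zero => simp
  | add x y _ _ hx hy => rw [smul_add, hx, hy, add_zero]
  | smul c x _ hx => rw [smul_smul, mul_comm, ← smul_smul, hx, smul_zero]

/-- The pair `(0 ⊆ k[X]/(Xⁱ))` as an object of `Sₘ(k[T]/Tⁿ)`. -/
def pairZero (k : Type) [Field k] (m n i : ℕ) (h : i ≤ n) : SPair k m n where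
  B := Bq k i
  bound := fun b => Bq_bound k h b
  A := ⊥
  subBound := fun a ha => by rw [(Submodule.mem_bot _).mp ha, smul_zero]

/-- The pair `(⟨Xʲ⟩ ⊆ k[X]/(Xⁱ))` as an object of `Sₘ(k[T]/Tⁿ)`. -/
def pairCyc (k : Type) [Field k] (m n i j : ℕ) (h : i ≤ n) (hj : i ≤ j + m) : SPair k m n where
  B := Bq k i
  bound := fun b => Bq_bound k h b
  A := Submodule.span (Polynomial k) {(Submodule.Quotient.mk (X ^ j) : Bq k i)}
  subBound := fun a ha =>
    span_smul_eq_zero _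
      (fun v hv => by rw [Set.mem_singleton_iff] at hv; rw [hv]; exact Bq_smul_mk k hj) a ha

/-! A nonzero element `a` killed by `X`, taken in `A` if `A ≠ 0`, can be written `a = X ^ h • b`
with `h` maximal. Then `b` generates a direct summand: any submodule `C` maximal among those that
contain `X ^ (h + 1) • B` and avoid `a` is a complement of it. For `m = 1` the submodule `A` is
killed by `X`; so is the `⟨b⟩`-component of each of its elements, which is therefore a multiple of
`a`. Hence the decomposition is compatible with `A`, and if `(A, B)` is indecomposable, then `b`
generates `B` and `A` is either zero or generated by `a`. -/

theorem exists_pow_smul_eq_of_forall_ne {S α : Type*} [Monoid S] [MulAction S α] {p : S} {a : α}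
    {n : ℕ} (hn : ∀ x : α, p ^ n • x ≠ a) :
    ∃ (h : ℕ) (b : α), p ^ h • b = a ∧ ∀ c : α, p ^ (h + 1) • c ≠ a := by
  obtain ⟨h, hh, hh'⟩ := Nat.exists_not_and_succ_of_not_zero_of_exists
    (p := fun j ↦ ∀ x : α, p ^ j • x ≠ a) (fun h₀ ↦ h₀ a (by rw [pow_zero, one_smul])) ⟨n, hn⟩
  push Not at hh
  obtain ⟨b, hb⟩ := hh
  exact ⟨h, b, hb, hh'⟩

section Submodule

variable {R M : Type*} [Semiring R] [AddCommMonoid M] [Module R M]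

theorem mem_span_singleton_sup_iff {x y : M} {N : Submodule R M} :
    x ∈ Submodule.span R {y} ⊔ N ↔ ∃ r : R, ∃ z ∈ N, r • y + z = x := by
  simp only [Submodule.mem_sup, Submodule.mem_span_singleton, exists_exists_eq_and]

theorem exists_le_maximal_notMem {N : Submodule R M} {a : M} (ha : a ∉ N) :
    ∃ C, N ≤ C ∧ Maximal (fun C : Submodule R M ↦ a ∉ C) C := by
  refine zorn_le_nonempty₀ {C | a ∉ C} (fun c hc hchain C hC ↦ ⟨sSup c, ?_, fun _ ↦ le_sSup⟩) N ha
  rw [Set.mem_ofPred_eq, Submodule.mem_sSup_of_directed ⟨C, hC⟩ hchain.directedOn]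
  rintro ⟨D, hD, haD⟩
  exact hc hD haD

theorem exists_mem_ne_zero_smul_eq_zero {p : R} {N : Submodule R M} {n : ℕ} (hN : N ≠ ⊥)
    (hn : ∀ x ∈ N, p ^ n • x = 0) : ∃ a ∈ N, a ≠ 0 ∧ p • a = 0 := by
  obtain ⟨x, hx, hx₀⟩ := Submodule.exists_mem_ne_zero_of_ne_bot hN
  obtain ⟨j, hj, hj'⟩ := Nat.exists_not_and_succ_of_not_zero_of_exists
    (p := fun j ↦ p ^ j • x = 0) (by rwa [pow_zero, one_smul]) ⟨n, hn x hx⟩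
  exact ⟨p ^ j • x, N.smul_mem _ hx, hj, by rwa [smul_smul, ← pow_succ']⟩

end Submodule

section MaximalIdeal

variable {R : Type*} [CommRing R] {p r : R}

theorem isCoprime_of_not_dvd_of_isMaximal (hp : (Ideal.span {p}).IsMaximal) (hr : ¬ p ∣ r) :
    IsCoprime r p := by
  obtain ⟨s, _, hi, hsr⟩ := hp.exists_inv (mt Ideal.mem_span_singleton.mp hr)
  obtain ⟨t, rfl⟩ := Ideal.mem_span_singleton'.mp hi
  exact ⟨s, t, hsr⟩

theorem exists_pow_eq_mul_add_of_not_pow_dvd (hp : (Ideal.span {p}).IsMaximal) {h : ℕ}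
    (hr : ¬ p ^ (h + 1) ∣ r) : ∃ s t, p ^ h = s * r + t * p ^ (h + 1) := by
  induction h with
  | zero =>
    obtain ⟨s, t, hst⟩ := isCoprime_of_not_dvd_of_isMaximal hp (by simpa using hr)
    exact ⟨s, t, by simp [hst]⟩
  | succ h ih =>
    by_cases hdvd : p ^ (h + 1) ∣ r
    · obtain ⟨q, rfl⟩ := hdvd
      have hq : ¬ p ∣ q := fun hpq ↦
        hr (pow_succ p (h + 1) ▸ mul_dvd_mul_left (p ^ (h + 1)) hpq)
      obtain ⟨s, t, hst⟩ := isCoprime_of_not_dvd_of_isMaximal hp hq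
      exact ⟨s, t, by linear_combination (-p ^ (h + 1)) * hst⟩
    · obtain ⟨s, t, hst⟩ := ih hdvd
      exact ⟨p * s, t, by linear_combination p * hst⟩

variable {M : Type*} [AddCommGroup M] [Module R M] {b : M} {h : ℕ}

theorem pow_smul_mem_of_smul_mem (hp : (Ideal.span {p}).IsMaximal) (hb : p ^ (h + 1) • b = 0)
    {N : Submodule R M} (hr : r • b ∈ N) (hr₀ : r • b ≠ 0) : p ^ h • b ∈ N := by
  have hdvd : ¬ p ^ (h + 1) ∣ r := by
    rintro ⟨q, rfl⟩
    exact hr₀ (by rw [mul_comm, mul_smul, hb, smul_zero])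
  obtain ⟨s, t, hst⟩ := exists_pow_eq_mul_add_of_not_pow_dvd hp hdvd
  rw [hst, add_smul, mul_smul, mul_smul, hb, smul_zero, add_zero]
  exact N.smul_mem s hr

theorem torsionOf_eq_span_pow_succ (hp : (Ideal.span {p}).IsMaximal) (hb : p ^ (h + 1) • b = 0)
    (hb₀ : p ^ h • b ≠ 0) : Ideal.torsionOf R M b = Ideal.span {p ^ (h + 1)} := by
  refine le_antisymm (fun r hr ↦ ?_) ((Ideal.span_singleton_le_iff_mem _).mpr hb)
  rw [Ideal.mem_torsionOf_iff] at hr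
  rw [Ideal.mem_span_singleton]
  by_contra hdvd
  obtain ⟨s, t, hst⟩ := exists_pow_eq_mul_add_of_not_pow_dvd hp hdvd
  exact hb₀ (by rw [hst, add_smul, mul_smul, mul_smul, hr, hb, smul_zero, smul_zero, add_zero])

theorem mem_span_pow_smul_of_smul_eq_zero (hp : (Ideal.span {p}).IsMaximal)
    (hb : p ^ (h + 1) • b = 0) (hb₀ : p ^ h • b ≠ 0) {x : M} (hx : x ∈ Submodule.span R {b})
    (hpx : p • x = 0) : x ∈ Submodule.span R {p ^ h • b} := by
  obtain ⟨r, rfl⟩ := Submodule.mem_span_singleton.mp hx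
  cases h with
  | zero => simpa using hx
  | succ h =>
    have hr : r ∈ Ideal.torsionOf R M (p • b) := by rwa [Ideal.mem_torsionOf_iff, smul_comm]
    rw [torsionOf_eq_span_pow_succ hp (by rwa [smul_smul, ← pow_succ])
      (by rwa [smul_smul, ← pow_succ]), Ideal.mem_span_singleton'] at hr
    obtain ⟨q, rfl⟩ := hr
    exact Submodule.mem_span_singleton.mpr ⟨q, smul_smul _ _ _⟩

theorem eq_bot_or_eq_bot_of_disjoint (hp : (Ideal.span {p}).IsMaximal)
    (hspan : Submodule.span R {b} = ⊤) (hb : p ^ (h + 1) • b = 0) (hb₀ : p ^ h • b ≠ 0)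
    {S T : Submodule R M} (hST : Disjoint S T) : S = ⊥ ∨ T = ⊥ := by
  have pow_smul_mem {N : Submodule R M} (hN : N ≠ ⊥) : p ^ h • b ∈ N := by
    obtain ⟨x, hx, hx₀⟩ := Submodule.exists_mem_ne_zero_of_ne_bot hN
    obtain ⟨r, rfl⟩ := (Submodule.span_singleton_eq_top_iff R b).mp hspan x
    exact pow_smul_mem_of_smul_mem hp hb hx hx₀
  by_contra! hne
  exact hb₀ (Submodule.disjoint_def.mp hST _ (pow_smul_mem hne.1) (pow_smul_mem hne.2))

theorem exists_linearEquiv_quotient_span_pow (hp : (Ideal.span {p}).IsMaximal)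
    (hspan : Submodule.span R {b} = ⊤) (hb : p ^ (h + 1) • b = 0) (hb₀ : p ^ h • b ≠ 0) :
    ∃ e : M ≃ₗ[R] R ⧸ Ideal.span {p ^ (h + 1)}, ∀ r : R, e (r • b) = Submodule.Quotient.mk r := by
  let e : (R ⧸ Ideal.span {p ^ (h + 1)}) ≃ₗ[R] M :=
    Submodule.quotEquivOfEq _ _ (torsionOf_eq_span_pow_succ hp hb hb₀).symm ≪≫ₗ
      Ideal.quotTorsionOfEquivSpanSingleton R M b ≪≫ₗ LinearEquiv.ofTop _ hspan
  exact ⟨e.symm, fun r ↦ e.symm_apply_eq.mpr rfl⟩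

/- Every submodule strictly larger than `C` contains `a`, so the class of `a` generates the part of
`M ⧸ C` killed by `p`. -/
theorem mem_span_singleton_sup_of_smul_mem (hp : (Ideal.span {p}).IsMaximal) {a y : M}
    {C : Submodule R M} (hC : Maximal (fun C : Submodule R M ↦ a ∉ C) C) (hy : p • y ∈ C) :
    y ∈ Submodule.span R {a} ⊔ C := by
  by_cases hyC : y ∈ C
  · exact Submodule.mem_sup_right hyC
  have ha : a ∈ Submodule.span R {y} ⊔ C := by
    by_contra ha
    exact hyC (hC.le_of_ge ha le_sup_right
      (Submodule.mem_sup_left (Submodule.mem_span_singleton_self y)))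
  obtain ⟨r, c, hc, rfl⟩ := mem_span_singleton_sup_iff.mp ha
  have hr : ¬ p ∣ r := by
    rintro ⟨q, rfl⟩
    refine hC.prop (C.add_mem ?_ hc)
    rw [mul_comm, mul_smul]
    exact C.smul_mem q hy
  obtain ⟨s, t, hst⟩ := isCoprime_of_not_dvd_of_isMaximal hp hr
  refine mem_span_singleton_sup_iff.mpr
    ⟨s, t • p • y - s • c, C.sub_mem (C.smul_mem t hy) (C.smul_mem s hc), ?_⟩
  linear_combination (norm := module) hst • y

theorem mem_span_singleton_sup_of_smul_mem_sup (hp : (Ideal.span {p}).IsMaximal)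
    (hb : p ^ (h + 1) • b = 0) {C : Submodule R M} (hle : ∀ x : M, p ^ (h + 1) • x ∈ C)
    (hC : Maximal (fun C : Submodule R M ↦ p ^ h • b ∉ C) C) {x : M}
    (hx : p • x ∈ Submodule.span R {b} ⊔ C) : x ∈ Submodule.span R {b} ⊔ C := by
  obtain ⟨r, c, hc, hrc⟩ := mem_span_singleton_sup_iff.mp hx
  have hr : p ∣ r := by
    by_contra hr
    obtain ⟨s, t, hst⟩ := isCoprime_of_not_dvd_of_isMaximal hp hr
    have hpow : p ^ h • b = s • (p ^ (h + 1) • x - p ^ h • c) := by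
      linear_combination (norm := module) (-p ^ h * hst) • b + (s * p ^ h) • hrc + t • hb
    exact hC.prop (hpow ▸ C.smul_mem s (C.sub_mem (hle x) (C.smul_mem _ hc)))
  obtain ⟨q, rfl⟩ := hr
  have hq : p • (x - q • b) = c := by linear_combination (norm := module) -hrc
  have hxq : x - q • b ∈ Submodule.span R {p ^ h • b} ⊔ C :=
    mem_span_singleton_sup_of_smul_mem hp hC (hq ▸ hc)
  have hle_span : Submodule.span R {p ^ h • b} ≤ Submodule.span R {b} :=
    Submodule.span_singleton_smul_le R (p ^ h) b
  rw [← sub_add_cancel x (q • b)]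
  exact add_mem (sup_le_sup_right hle_span C hxq)
    (Submodule.mem_sup_left (Submodule.smul_mem _ q (Submodule.mem_span_singleton_self b)))

theorem isCompl_span_singleton_of_maximal_notMem (hp : (Ideal.span {p}).IsMaximal)
    (hb : p ^ (h + 1) • b = 0) {C : Submodule R M} (hle : ∀ x : M, p ^ (h + 1) • x ∈ C)
    (hC : Maximal (fun C : Submodule R M ↦ p ^ h • b ∉ C) C) :
    IsCompl (Submodule.span R {b}) C := by
  refine ⟨Submodule.disjoint_def.mpr fun x hx hxC ↦ ?_, codisjoint_iff_le_sup.mpr fun x _ ↦ ?_⟩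
  · obtain ⟨r, rfl⟩ := Submodule.mem_span_singleton.mp hx
    by_contra hr
    exact hC.prop (pow_smul_mem_of_smul_mem hp hb hxC hr)
  · have mem_of_pow_smul_mem (j : ℕ) :
        p ^ j • x ∈ Submodule.span R {b} ⊔ C → x ∈ Submodule.span R {b} ⊔ C := by
      induction j with
      | zero => rw [pow_zero, one_smul]; exact id
      | succ j ih =>
        rw [pow_succ', mul_smul]
        exact ih ∘ mem_span_singleton_sup_of_smul_mem_sup hp hb hle hC
    exact mem_of_pow_smul_mem (h + 1) (Submodule.mem_sup_right (hle x))

theorem exists_isCompl_span_singleton (hp : (Ideal.span {p}).IsMaximal)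
    (hb : p ^ (h + 1) • b = 0) (hb_height : ∀ c : M, p ^ (h + 1) • c ≠ p ^ h • b) :
    ∃ C, IsCompl (Submodule.span R {b}) C := by
  have hnotMem : p ^ h • b ∉ LinearMap.range (LinearMap.lsmul R M (p ^ (h + 1))) :=
    fun ⟨c, hc⟩ ↦ hb_height c hc
  obtain ⟨C, hle, hC⟩ := exists_le_maximal_notMem hnotMem
  exact ⟨C, isCompl_span_singleton_of_maximal_notMem hp hb (fun x ↦ hle ⟨x, rfl⟩) hC⟩

theorem eq_inf_sup_inf_of_isCompl_span_singleton (hp : (Ideal.span {p}).IsMaximal)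
    (hb : p ^ (h + 1) • b = 0) (hb₀ : p ^ h • b ≠ 0) {A C : Submodule R M}
    (hA : ∀ a ∈ A, p • a = 0) (hbA : p ^ h • b ∈ A) (hC : IsCompl (Submodule.span R {b}) C) :
    A = A ⊓ Submodule.span R {b} ⊔ A ⊓ C := by
  refine le_antisymm (fun x hx ↦ ?_) (sup_le inf_le_left inf_le_left)
  obtain ⟨y, hy, c, hc, rfl⟩ := Submodule.mem_sup.mp (hC.sup_eq_top ▸ Submodule.mem_top (x := x))
  have hpy : p • y = 0 := by
    have hyc : p • y = -(p • c) := eq_neg_of_add_eq_zero_left (smul_add p y c ▸ hA _ hx)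
    exact Submodule.disjoint_def.mp hC.disjoint _ (Submodule.smul_mem _ p hy)
      (hyc ▸ C.neg_mem (C.smul_mem p hc))
  have hyA : y ∈ A := (Submodule.span_singleton_le_iff_mem _ _).mpr hbA
    (mem_span_pow_smul_of_smul_eq_zero hp hb hb₀ hy hpy)
  exact Submodule.add_mem_sup ⟨hyA, hy⟩ ⟨(A.add_mem_iff_right hyA).mp hx, hc⟩

end MaximalIdeal

section Pairs

variable {k : Type} [Field k] {m n i j : ℕ}

theorem isMaximal_span_X : (Ideal.span {(X : k[X])}).IsMaximal :=
  PrincipalIdealRing.isMaximal_of_irreducible irreducible_X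

theorem mk_X_pow_eq_zero_iff : (Submodule.Quotient.mk (X ^ j) : Bq k i) = 0 ↔ i ≤ j := by
  rw [Submodule.Quotient.mk_eq_zero, Ideal.mem_span_singleton,
    pow_dvd_pow_iff X_ne_zero not_isUnit_X]

theorem X_pow_smul_mk_one_eq_zero_iff :
    (X : k[X]) ^ j • (Submodule.Quotient.mk 1 : Bq k i) = 0 ↔ i ≤ j := by
  rw [← Submodule.Quotient.mk_smul, smul_eq_mul, mul_one, mk_X_pow_eq_zero_iff]

theorem eq_of_linearEquiv_Bq (e : Bq k i ≃ₗ[k[X]] Bq k j) : i = j := by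
  have hspan : Ideal.span {(X : k[X]) ^ i} = Ideal.span {X ^ j} := by
    simpa only [Ideal.annihilator_quotient] using e.annihilator_eq
  have hassoc := Ideal.span_singleton_eq_span_singleton.mp hspan
  exact le_antisymm ((pow_dvd_pow_iff X_ne_zero not_isUnit_X).mp hassoc.dvd)
    ((pow_dvd_pow_iff X_ne_zero not_isUnit_X).mp hassoc.symm.dvd)

theorem span_mk_one_Bq_eq_top : Submodule.span k[X] {(Submodule.Quotient.mk 1 : Bq k i)} = ⊤ := by
  rw [Submodule.span_singleton_eq_top_iff]
  intro x
  obtain ⟨r, rfl⟩ := Submodule.Quotient.mk_surjective _ x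
  exact ⟨r, by rw [← Submodule.Quotient.mk_smul, smul_eq_mul, mul_one]⟩

namespace SPair

theorem Indec.span_singleton_eq_top {M : SPair k m n} (hM : M.Indec) {b : M.B} (hb : b ≠ 0)
    {C : Submodule k[X] M.B} (hC : IsCompl (Submodule.span k[X] {b}) C)
    (hA : M.A = M.A ⊓ Submodule.span k[X] {b} ⊔ M.A ⊓ C) : Submodule.span k[X] {b} = ⊤ := by
  have hC₀ : C = ⊥ := (hM.2 _ C hC.inf_eq_bot hC.sup_eq_top hA).resolve_left
    (mt Submodule.span_singleton_eq_bot.mp hb)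
  exact eq_top_of_isCompl_bot (hC₀ ▸ hC)

theorem exists_ne_zero_X_smul_eq_zero {M : SPair k m n} (hM : ∃ b : M.B, b ≠ 0) :
    ∃ a : M.B, a ≠ 0 ∧ (X : k[X]) • a = 0 ∧ (M.A = ⊥ ∨ a ∈ M.A) := by
  by_cases hA : M.A = ⊥
  · have : Nontrivial M.B := (nontrivial_iff_exists_ne 0).mpr hM
    obtain ⟨a, -, ha₀, hXa⟩ := exists_mem_ne_zero_smul_eq_zero
      (top_ne_bot (α := Submodule k[X] M.B)) fun x _ ↦ M.bound x
    exact ⟨a, ha₀, hXa, .inl hA⟩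
  · obtain ⟨a, ha, ha₀, hXa⟩ := exists_mem_ne_zero_smul_eq_zero hA fun x _ ↦ M.bound x
    exact ⟨a, ha₀, hXa, .inr ha⟩

theorem indec_of_span_singleton_eq_top {M : SPair k m n} {b : M.B} {h : ℕ}
    (hspan : Submodule.span k[X] {b} = ⊤) (hb : (X : k[X]) ^ (h + 1) • b = 0)
    (hb₀ : (X : k[X]) ^ h • b ≠ 0) : M.Indec :=
  ⟨⟨_, hb₀⟩, fun _ _ hST _ _ ↦
    eq_bot_or_eq_bot_of_disjoint isMaximal_span_X hspan hb hb₀ (disjoint_iff.mpr hST)⟩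

theorem Indec.exists_span_singleton_eq_top {M : SPair k 1 n} (hM : M.Indec) :
    ∃ (h : ℕ) (b : M.B), Submodule.span k[X] {b} = ⊤ ∧ (X : k[X]) ^ (h + 1) • b = 0 ∧
      (X : k[X]) ^ h • b ≠ 0 ∧
      (M.A = ⊥ ∨ M.A = Submodule.span k[X] {(X : k[X]) ^ h • b}) := by
  have hA : ∀ a ∈ M.A, (X : k[X]) • a = 0 := fun a ha ↦ by
    simpa only [pow_one] using M.subBound a ha
  obtain ⟨a, ha₀, hXa, haA⟩ := exists_ne_zero_X_smul_eq_zero hM.1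
  obtain ⟨h, b, rfl, hheight⟩ :=
    exists_pow_smul_eq_of_forall_ne fun x ↦ (M.bound x).trans_ne ha₀.symm
  have hb : (X : k[X]) ^ (h + 1) • b = 0 := by rw [pow_succ', mul_smul, hXa]
  obtain ⟨C, hC⟩ := exists_isCompl_span_singleton isMaximal_span_X hb hheight
  have hsplit : M.A = M.A ⊓ Submodule.span k[X] {b} ⊔ M.A ⊓ C := by
    rcases haA with hbot | haA
    · simp only [hbot, bot_inf_eq, bot_sup_eq]
    · exact eq_inf_sup_inf_of_isCompl_span_singleton isMaximal_span_X hb ha₀ hA haA hC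
  have hspan := hM.span_singleton_eq_top (right_ne_zero_of_smul ha₀) hC hsplit
  refine ⟨h, b, hspan, hb, ha₀, haA.imp_right fun haA ↦ le_antisymm (fun x hx ↦ ?_)
    ((Submodule.span_singleton_le_iff_mem _ _).mpr haA)⟩
  exact mem_span_pow_smul_of_smul_eq_zero isMaximal_span_X hb ha₀ (hspan ▸ Submodule.mem_top)
    (hA x hx)

theorem Indec.iso_pairZero_or_iso_pairCyc {M : SPair k 1 n} (hM : M.Indec) :
    ∃ (h : ℕ) (hn : h + 1 ≤ n),
      M.Iso (pairZero k 1 n (h + 1) hn) ∨ M.Iso (pairCyc k 1 n (h + 1) h hn le_rfl) := by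
  obtain ⟨h, b, hspan, hb, hb₀, hA⟩ := hM.exists_span_singleton_eq_top
  have hn : h + 1 ≤ n := by
    by_contra! hlt
    exact hb₀ (by rw [← pow_sub_mul_pow X (Nat.lt_succ_iff.mp hlt), mul_smul, M.bound, smul_zero])
  obtain ⟨e, he⟩ := exists_linearEquiv_quotient_span_pow isMaximal_span_X hspan hb hb₀
  refine ⟨h, hn, hA.imp (fun hA ↦ ⟨e, ?_⟩) fun hA ↦ ⟨e, ?_⟩⟩
  · rw [hA]
    exact Submodule.map_bot _
  · rw [hA, Submodule.map_span, Set.image_singleton]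
    exact congrArg (fun x ↦ Submodule.span k[X] {x}) (he (X ^ h))

end SPair

theorem pairZero_indec (h : i + 1 ≤ n) : (pairZero k m n (i + 1) h).Indec :=
  SPair.indec_of_span_singleton_eq_top (b := (Submodule.Quotient.mk 1 : Bq k (i + 1)))
    span_mk_one_Bq_eq_top (Bq_bound k le_rfl _)
    (X_pow_smul_mk_one_eq_zero_iff.not.mpr i.not_succ_le_self)

theorem pairCyc_indec (h : i + 1 ≤ n) (hj : i + 1 ≤ j + m) :
    (pairCyc k m n (i + 1) j h hj).Indec :=
  SPair.indec_of_span_singleton_eq_top (b := (Submodule.Quotient.mk 1 : Bq k (i + 1)))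
    span_mk_one_Bq_eq_top (Bq_bound k le_rfl _)
    (X_pow_smul_mk_one_eq_zero_iff.not.mpr i.not_succ_le_self)

theorem not_iso_pairZero_pairCyc {l : ℕ} (hi : i ≤ n) (hj : j ≤ n) (hl : j ≤ l + m) (hlj : l < j) :
    ¬ (pairZero k m n i hi).Iso (pairCyc k m n j l hj hl) := by
  rintro ⟨e, he⟩
  have hspan : Submodule.span k[X] {(Submodule.Quotient.mk (X ^ l) : Bq k j)} = ⊥ :=
    he.symm.trans (Submodule.map_bot e.toLinearMap)
  exact hlj.not_ge (mk_X_pow_eq_zero_iff.mp (Submodule.span_singleton_eq_bot.mp hspan))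

end Pairs

/-- **Proposition 7 (classification for `m = 1`).** The `2n` pairs `(0 ⊆ k[X]/(Xⁱ))` and
`(Xⁱ⁻¹·k[X]/(Xⁱ) ⊆ k[X]/(Xⁱ))`, for `1 ≤ i ≤ n`, are indecomposable objects of
`S₁(k[T]/Tⁿ)`, they are pairwise non-isomorphic, and every indecomposable object of
`S₁(k[T]/Tⁿ)` is isomorphic to one of them.  In particular `S₁(k[T]/Tⁿ)` has exactly `2n`
isomorphism classes of indecomposable objects. -/
theorem classification_S1 (k : Type) [Field k] (n : ℕ) (hn : 0 < n) :
    (∀ i, 1 ≤ i → ∀ hi : i ≤ n, (pairZero k 1 n i hi).Indec) ∧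
    (∀ i, 1 ≤ i → ∀ hi : i ≤ n, (pairCyc k 1 n i (i - 1) hi (by omega)).Indec) ∧
    (∀ i j, 1 ≤ i → 1 ≤ j → ∀ hi : i ≤ n, ∀ hj : j ≤ n, i ≠ j →
      ¬ (pairZero k 1 n i hi).Iso (pairZero k 1 n j hj)) ∧
    (∀ i j, 1 ≤ i → 1 ≤ j → ∀ hi : i ≤ n, ∀ hj : j ≤ n, i ≠ j →
      ¬ (pairCyc k 1 n i (i - 1) hi (by omega)).Iso (pairCyc k 1 n j (j - 1) hj (by omega))) ∧
    (∀ i j, 1 ≤ i → 1 ≤ j → ∀ hi : i ≤ n, ∀ hj : j ≤ n,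
      ¬ (pairZero k 1 n i hi).Iso (pairCyc k 1 n j (j - 1) hj (by omega))) ∧
    (∀ M : SPair k 1 n, M.Indec →
      (∃ i, ∃ (_ : 1 ≤ i) (hi : i ≤ n), M.Iso (pairZero k 1 n i hi)) ∨
      (∃ i, ∃ (_ : 1 ≤ i) (hi : i ≤ n), M.Iso (pairCyc k 1 n i (i - 1) hi (by omega)))) := by
  refine ⟨?_, ?_, ?_, ?_, ?_, ?_⟩
  · rintro (_ | i) hi₀ hi
    · contradiction
    · exact pairZero_indec hi
  · rintro (_ | i) hi₀ hi
    · contradiction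
    · exact pairCyc_indec hi le_rfl
  · rintro i j _ _ hi hj hij ⟨e, _⟩
    exact hij (eq_of_linearEquiv_Bq e)
  · rintro i j _ _ hi hj hij ⟨e, _⟩
    exact hij (eq_of_linearEquiv_Bq e)
  · intro i j _ hj₀ hi hj
    exact not_iso_pairZero_pairCyc hi hj _ (Nat.sub_one_lt_of_lt hj₀)
  · intro M hM
    obtain ⟨h, hn, hiso | hiso⟩ := hM.iso_pairZero_or_iso_pairCyc
    · exact .inl ⟨h + 1, h.succ_pos, hn, hiso⟩
    · exact .inr ⟨h + 1, h.succ_pos, hn, hiso⟩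

end
end

section
/- Let p be a prime and let D = ℤ/p^7 × ℤ/p^6 × ℤ/p^4 × ℤ/p^3 × ℤ/p, with x₁, …, x₅ the canonical generators of the five factors. For an integer λ let C_λ be the subgroup of D generated by the three elements u₁ = p^4 x₁ + p x₄ + x₅, u₂ = p^3 x₂ + p^2 x₃ + x₅ and u₃ = p^3 x₃ + λ p^2 x₄. Then p^3·C_λ = 0, so (C_λ, D) is an object of S_3(ℤ/p^7); for every λ ∈ {0, 1, …, p−1} the pair (C_λ, D) is indecomposable, and for λ, μ ∈ {0, 1, …, p−1} with λ ≠ μ the pairs (C_λ, D) and (C_μ, D) are not isomorphic. -/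
/-- Indecomposability of a subgroup pair `(A ≤ B)`: `B ≠ 0` and for every internal direct
sum decomposition `B = B₁ ⊕ B₂` with `A = (A ∩ B₁) ⊕ (A ∩ B₂)`, one of `B₁`, `B₂` is `0`. -/
def AddPairIndec (B : Type) [AddCommGroup B] (A : AddSubgroup B) : Prop :=
  (∃ b : B, b ≠ 0) ∧
    ∀ B₁ B₂ : AddSubgroup B,
      B₁ ⊓ B₂ = ⊥ → B₁ ⊔ B₂ = ⊤ → A = A ⊓ B₁ ⊔ A ⊓ B₂ → B₁ = ⊥ ∨ B₂ = ⊥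

/-- Isomorphism of subgroup pairs over a common ambient group: a group automorphism
carrying the one subgroup onto the other. -/
def AddPairIso (B : Type) [AddCommGroup B] (A A' : AddSubgroup B) : Prop :=
  ∃ e : B ≃+ B, A.map e.toAddMonoidHom = A'

/-- The group `D = ℤ/p⁷ × ℤ/p⁶ × ℤ/p⁴ × ℤ/p³ × ℤ/p`. -/
abbrev D7 (p : ℕ) : Type :=
  ZMod (p ^ 7) × ZMod (p ^ 6) × ZMod (p ^ 4) × ZMod (p ^ 3) × ZMod p

/-- `u₁ = p⁴x₁ + px₄ + x₅`. -/
def u₁ (p : ℕ) : D7 p := ((p : ZMod (p ^ 7)) ^ 4, 0, 0, (p : ZMod (p ^ 3)), 1)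

/-- `u₂ = p³x₂ + p²x₃ + x₅`. -/
def u₂ (p : ℕ) : D7 p := (0, (p : ZMod (p ^ 6)) ^ 3, (p : ZMod (p ^ 4)) ^ 2, 0, 1)

/-- `u₃ = p³x₃ + λp²x₄`. -/
def u₃ (p a : ℕ) : D7 p := (0, 0, (p : ZMod (p ^ 4)) ^ 3, (a : ZMod (p ^ 3)) * (p : ZMod (p ^ 3)) ^ 2, 0)

/-- The subgroup `C_λ = ⟨u₁, u₂, u₃⟩` of `D`. -/
def C7 (p a : ℕ) : AddSubgroup (D7 p) := AddSubgroup.closure {u₁ p, u₂ p, u₃ p a}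

/-!
In the generators `x₁, …, x₅`, of orders `p ^ n₁, …, p ^ n₅` with `n₁ > ⋯ > n₅`, an endomorphism of
`D` is given by an integer matrix whose `(i, j)` entry is divisible by `p ^ (nᵢ - nⱼ)` for `i < j`.
Modulo `p` this matrix is lower triangular, so the endomorphism is bijective exactly when no
diagonal entry is divisible by `p`.

Comparing coordinates in `f u₁, f u₂, f u₃ ∈ C_μ` shows that an endomorphism `f` of `D` with
`f C_λ ⊆ C_μ` has all its diagonal entries congruent to one scalar `c` modulo `p`, and that
`λ c ≡ μ c`. If `f` is an automorphism then `c ≢ 0`, hence `λ ≡ μ`. If `λ = μ`, one of `c` and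
`1 - c` is nonzero modulo `p`, so one of `f` and `1 - f` is injective. Applied to the projection
of a direct sum decomposition, this says that one of the two summands is zero.
-/

open Function Matrix

section Represents

variable {R M ι : Type*} [CommRing R] [AddCommGroup M] [Module R M] [Fintype ι] [DecidableEq ι]
  {x : ι → M} {A : Matrix ι ι R} {f : Module.End R M}

theorem exists_represents (hx : Surjective (Fintype.linearCombination R x))
    (f : Module.End R M) : ∃ A : Matrix ι ι R, A.Represents x f := by
  have hspan := (span_range_eq_top_iff_surjective_fintypeLinearCombination R x).2 hx
  obtain ⟨A, rfl⟩ := Matrix.isRepresentation.toEnd_surjective R x hspan f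
  exact ⟨A, Matrix.isRepresentation.toEnd_represents R x hspan A⟩

theorem det_smul_mem_range_of_represents (hx : Surjective (Fintype.linearCombination R x))
    (hA : A.Represents x f) (v : M) : A.det • v ∈ LinearMap.range f := by
  obtain ⟨y, rfl⟩ := hx v
  refine ⟨Fintype.linearCombination R x (A.adjugate *ᵥ y), ?_⟩
  rw [← hA.congr_fun, mulVec_mulVec, mul_adjugate, smul_mulVec, one_mulVec, map_smul]

theorem injective_of_represents_of_isCoprime_det
    (hx : Surjective (Fintype.linearCombination R x)) (hA : A.Represents x f) {r : R}
    (hr : ∀ v : M, r • v = 0) (hdet : IsCoprime A.det r) : Injective f := by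
  have : Module.Finite R M := .of_surjective _ hx
  refine OrzechProperty.injective_of_surjective_endomorphism f fun v ↦ ?_
  obtain ⟨s, t, hst⟩ := hdet
  have hv : A.det • s • v = v := calc
    A.det • s • v = (s * A.det + t * r) • v := by
      rw [add_smul, mul_smul t r, hr, smul_zero, add_zero, smul_smul, mul_comm]
    _ = v := by rw [hst, one_smul]
  exact hv ▸ det_smul_mem_range_of_represents hx hA (s • v)

theorem represents_one_sub (hA : A.Represents x f) : (1 - A).Represents x (1 - f) := by
  simpa [sub_eq_add_neg] using Matrix.Represents.one.add (hA.smul (-1))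

end Represents

theorem isCoprime_pow_of_intCast_ne_zero {p : ℕ} (hp : p.Prime) {k : ℤ}
    (hk : (k : ZMod p) ≠ 0) (m : ℕ) : IsCoprime k ((p : ℤ) ^ m) := by
  rw [Ne, ZMod.intCast_zmod_eq_zero_iff_dvd] at hk
  exact ((Nat.prime_iff_prime_int.1 hp).irreducible.coprime_iff_not_dvd.2 hk).symm.pow_right

theorem intCast_eq_of_pow_dvd {p : ℕ} (hp : p ≠ 0) {k m : ℕ} (hkm : k < m) {w y z t : ℤ}
    (h : (p : ℤ) ^ m ∣ w) (hw : w = p ^ k * (y - z + p * t)) : (y : ZMod p) = z := by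
  have hp' : (p : ℤ) ≠ 0 := mod_cast hp
  have hdvd := (pow_dvd_pow (p : ℤ) hkm).trans h
  rw [hw, pow_succ, mul_dvd_mul_iff_left (pow_ne_zero k hp')] at hdvd
  rw [← sub_eq_zero, ← Int.cast_sub, ZMod.intCast_zmod_eq_zero_iff_dvd]
  exact (dvd_add_left (dvd_mul_right _ t)).1 hdvd

/-- The module is the internal direct sum of its cyclic submodules `R ∙ x i`, and the annihilator
of `x i` is generated by `d i`. -/
structure IsCyclicBasis {R M ι : Type*} [CommRing R] [AddCommGroup M] [Module R M] [Fintype ι]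
    (d : ι → R) (x : ι → M) : Prop where
  surjective : Surjective (Fintype.linearCombination R x)
  linearCombination_eq_zero_iff (y : ι → R) :
    Fintype.linearCombination R x y = 0 ↔ ∀ i, d i ∣ y i

/-- The matrix with entries `π ^ (n i - n j) * N i j`, where the exponent is truncated at `0`. For
a cyclic basis with orders `π ^ n i` these are the matrices that represent endomorphisms. -/
def powScaled {R ι : Type*} [CommRing R] (π : R) (n : ι → ℕ) (N : Matrix ι ι R) : Matrix ι ι R :=
  of fun i j ↦ π ^ (n i - n j) * N i j

theorem powScaled_one_sub {R ι : Type*} [CommRing R] [DecidableEq ι] (π : R) (n : ι → ℕ)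
    (N : Matrix ι ι R) : powScaled π n (1 - N) = 1 - powScaled π n N := by
  ext i j
  obtain rfl | hij := eq_or_ne i j <;> simp [powScaled, *]

theorem map_det_powScaled {R S ι : Type*} [CommRing R] [CommRing S] [Fintype ι] [LinearOrder ι]
    (φ : R →+* S) {π : R} (hπ : φ π = 0) {n : ι → ℕ} (hn : StrictAnti n) (N : Matrix ι ι R) :
    φ (powScaled π n N).det = ∏ i, φ (N i i) := by
  have hlower : (φ.mapMatrix (powScaled π n N)).IsLowerTriangular := by
    intro i j hij
    have : n i - n j ≠ 0 := Nat.sub_ne_zero_of_lt (hn hij)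
    simp [powScaled, hπ, this]
  rw [RingHom.map_det, det_of_isLowerTriangular _ hlower]
  simp [powScaled]

namespace IsCyclicBasis

variable {R M ι : Type*} [CommRing R] [AddCommGroup M] [Module R M] [Fintype ι]
  {d : ι → R} {x : ι → M}

theorem linearCombination_eq_iff (hx : IsCyclicBasis d x) (y z : ι → R) :
    Fintype.linearCombination R x y = Fintype.linearCombination R x z ↔
      ∀ i, d i ∣ y i - z i := by
  rw [← sub_eq_zero, ← map_sub, hx.linearCombination_eq_zero_iff]
  rfl

theorem smul_eq_zero (hx : IsCyclicBasis d x) {r : R} (hr : ∀ i, d i ∣ r) (v : M) :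
    r • v = 0 := by
  obtain ⟨y, rfl⟩ := hx.surjective v
  rw [← map_smul, hx.linearCombination_eq_zero_iff]
  exact fun i ↦ (hr i).mul_right (y i)

variable [DecidableEq ι] {A B : Matrix ι ι R} {f : Module.End R M}

theorem dvd_mul_of_represents (hx : IsCyclicBasis d x) (hA : A.Represents x f) (i j : ι) :
    d i ∣ d j * A i j := by
  have hdj : Fintype.linearCombination R x (Pi.single j (d j)) = 0 := by
    rw [hx.linearCombination_eq_zero_iff]
    intro k
    obtain rfl | hk := eq_or_ne k j
    · simp
    · simp [hk]
  have h := hA.congr_fun (Pi.single j (d j))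
  rw [hdj, map_zero, hx.linearCombination_eq_zero_iff] at h
  simpa [mul_comm] using h i

theorem map_eq_map_of_represents {S : Type*} [CommRing S] (φ : R →+* S) (hφ : ∀ i, φ (d i) = 0)
    (hx : IsCyclicBasis d x) (hA : A.Represents x f) (hB : B.Represents x f) :
    φ.mapMatrix A = φ.mapMatrix B := by
  ext i j
  have h := (hA.congr_fun (Pi.single j 1)).trans (hB.congr_fun (Pi.single j 1)).symm
  rw [hx.linearCombination_eq_iff] at h
  obtain ⟨c, hc⟩ := h i
  have hij : A i j - B i j = d i * c := by simpa using hc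
  simpa [hφ, sub_eq_zero] using congrArg φ hij

theorem isUnit_map_det_of_represents {S : Type*} [CommRing S] (φ : R →+* S)
    (hφ : ∀ i, φ (d i) = 0) (hx : IsCyclicBasis d x) (hA : A.Represents x f) (hf : Bijective f) :
    IsUnit (φ A.det) := by
  let e := LinearEquiv.ofBijective f hf
  obtain ⟨B, hB⟩ := exists_represents hx.surjective (e.symm : Module.End R M)
  have hfe : f * (e.symm : Module.End R M) = 1 := LinearMap.ext e.apply_symm_apply
  have hAB : φ.mapMatrix (A * B) = φ.mapMatrix 1 :=
    hx.map_eq_map_of_represents φ hφ (hfe ▸ hA.mul hB) Matrix.Represents.one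
  refine IsUnit.of_mul_eq_one (φ B.det) ?_
  rw [← map_mul, ← det_mul, RingHom.map_det, hAB, map_one, det_one]

theorem exists_powScaled_represents [IsDomain R] {π : R} (hπ : π ≠ 0) {n : ι → ℕ}
    (hx : IsCyclicBasis (fun i ↦ π ^ n i) x) (f : Module.End R M) :
    ∃ N : Matrix ι ι R, (powScaled π n N).Represents x f := by
  obtain ⟨A, hA⟩ := exists_represents hx.surjective f
  have hdvd (i j : ι) : π ^ (n i - n j) ∣ A i j := by
    obtain h | h := le_total (n i) (n j)
    · simp [Nat.sub_eq_zero_of_le h]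
    · have := hx.dvd_mul_of_represents hA i j
      rwa [← Nat.add_sub_of_le h, pow_add, mul_dvd_mul_iff_left (pow_ne_zero _ hπ)] at this
  choose N hN using hdvd
  refine ⟨of N, ?_⟩
  convert hA
  ext i j
  exact (hN i j).symm

end IsCyclicBasis

namespace IsCyclicBasis

variable {B ι : Type*} [AddCommGroup B] [Fintype ι] [LinearOrder ι] {p : ℕ} {n : ι → ℕ}
  {x : ι → B} {N : Matrix ι ι ℤ} {f : Module.End ℤ B}

theorem injective_of_diag_ne_zero (hx : IsCyclicBasis (fun i ↦ (p : ℤ) ^ n i) x)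
    (hp : p.Prime) (hn : StrictAnti n) (hN : (powScaled (p : ℤ) n N).Represents x f)
    (hdiag : ∀ i, (N i i : ZMod p) ≠ 0) : Injective f := by
  have : Fact p.Prime := ⟨hp⟩
  have hdet : ((powScaled (p : ℤ) n N).det : ZMod p) ≠ 0 := by
    have := map_det_powScaled (Int.castRingHom (ZMod p)) (π := (p : ℤ)) (by simp) hn N
    simp only [eq_intCast] at this
    exact this ▸ Finset.prod_ne_zero_iff.2 fun i _ ↦ hdiag i
  exact injective_of_represents_of_isCoprime_det hx.surjective hN
    (hx.smul_eq_zero fun i ↦ pow_dvd_pow _ (Finset.le_sup (Finset.mem_univ i)))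
    (isCoprime_pow_of_intCast_ne_zero hp hdet (Finset.univ.sup n))

theorem diag_ne_zero_of_bijective (hx : IsCyclicBasis (fun i ↦ (p : ℤ) ^ n i) x)
    (hp : p.Prime) (hn : StrictAnti n) (hn0 : ∀ i, n i ≠ 0)
    (hN : (powScaled (p : ℤ) n N).Represents x f) (hf : Bijective f) (i : ι) :
    (N i i : ZMod p) ≠ 0 := by
  have : Fact p.Prime := ⟨hp⟩
  have hunit := hx.isUnit_map_det_of_represents (Int.castRingHom (ZMod p))
    (fun i ↦ by simp [hn0]) hN hf
  rw [map_det_powScaled _ (by simp) hn] at hunit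
  exact Finset.prod_ne_zero_iff.1 hunit.ne_zero i (Finset.mem_univ i)

end IsCyclicBasis

theorem addPairIndec_of_injective_or_injective {B : Type} [AddCommGroup B] [Nontrivial B]
    {A : AddSubgroup B}
    (h : ∀ e : Module.End ℤ B, (∀ x ∈ A, e x ∈ A) → Injective e ∨ Injective ⇑(1 - e)) :
    AddPairIndec B A := by
  refine ⟨exists_ne 0, fun B₁ B₂ hinf hsup hA ↦ ?_⟩
  have hcompl : IsCompl B₁.toIntSubmodule B₂.toIntSubmodule :=
    (OrderIso.isCompl_iff AddSubgroup.toIntSubmodule).1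
      ⟨disjoint_iff.2 hinf, codisjoint_iff.2 hsup⟩
  let e : Module.End ℤ B := B₁.toIntSubmodule.projection B₂.toIntSubmodule hcompl
  have he₁ {x : B} (hx : x ∈ B₁) : e x = x :=
    Submodule.projection_apply_of_mem_left hcompl hx
  have he₂ {x : B} (hx : x ∈ B₂) : e x = 0 :=
    Submodule.projection_apply_of_mem_right hcompl hx
  have heA : ∀ x ∈ A, e x ∈ A := by
    intro x hx
    rw [hA] at hx
    obtain ⟨y, hy, z, hz, rfl⟩ := AddSubgroup.mem_sup.1 hx
    rw [map_add, he₁ hy.2, he₂ hz.2, add_zero]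
    exact hy.1
  obtain hinj | hinj := h e heA
  · exact .inr <| (AddSubgroup.eq_bot_iff_forall _).2 fun x hx ↦
      (map_eq_zero_iff e hinj).1 (he₂ hx)
  · exact .inl <| (AddSubgroup.eq_bot_iff_forall _).2 fun x hx ↦
      (map_eq_zero_iff (1 - e) hinj).1 (by simp [he₁ hx])

namespace D7

/-- The canonical generators of `D`, indexed from `0`: `gen p i` is the `x_{i+1}` of the
statement. -/
def gen (p : ℕ) : Fin 5 → D7 p :=
  ![(1, 0, 0, 0, 0), (0, 1, 0, 0, 0), (0, 0, 1, 0, 0), (0, 0, 0, 1, 0), (0, 0, 0, 0, 1)]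

/-- The generator `gen p i` of `D` has order `p ^ exponent i`. -/
def exponent : Fin 5 → ℕ := ![7, 6, 4, 3, 1]

theorem strictAnti_exponent : StrictAnti exponent := by
  unfold exponent; decide

theorem linearCombination_gen (p : ℕ) (y : Fin 5 → ℤ) :
    Fintype.linearCombination ℤ (gen p) y =
      ((y 0 : ZMod (p ^ 7)), (y 1 : ZMod (p ^ 6)), (y 2 : ZMod (p ^ 4)), (y 3 : ZMod (p ^ 3)),
        (y 4 : ZMod p)) := by
  simp [Fintype.linearCombination_apply, Fin.sum_univ_five, gen,
    Prod.smul_mk, Prod.mk_add_mk, -zsmul_eq_mul]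

theorem isCyclicBasis_gen (p : ℕ) : IsCyclicBasis (fun i ↦ (p : ℤ) ^ exponent i) (gen p) where
  surjective := by
    rintro ⟨v₁, v₂, v₃, v₄, v₅⟩
    obtain ⟨y₁, rfl⟩ := ZMod.intCast_surjective v₁
    obtain ⟨y₂, rfl⟩ := ZMod.intCast_surjective v₂
    obtain ⟨y₃, rfl⟩ := ZMod.intCast_surjective v₃
    obtain ⟨y₄, rfl⟩ := ZMod.intCast_surjective v₄
    obtain ⟨y₅, rfl⟩ := ZMod.intCast_surjective v₅
    exact ⟨![y₁, y₂, y₃, y₄, y₅], linearCombination_gen p _⟩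
  linearCombination_eq_zero_iff y := by
    simp [linearCombination_gen, Prod.ext_iff, ZMod.intCast_zmod_eq_zero_iff_dvd,
      Fin.forall_fin_succ, exponent]

theorem pow_seven_smul_eq_zero {p : ℕ} (v : D7 p) : p ^ 7 • v = 0 := by
  rw [← natCast_zsmul]
  refine (isCyclicBasis_gen p).smul_eq_zero (fun i ↦ ?_) v
  rw [Nat.cast_pow]
  exact pow_dvd_pow _ (by fin_cases i <;> decide)

end D7

open D7

theorem u₁_eq_linearCombination (p : ℕ) :
    u₁ p = Fintype.linearCombination ℤ (gen p) ![(p : ℤ) ^ 4, 0, 0, p, 1] := by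
  simp [u₁, linearCombination_gen]

theorem u₂_eq_linearCombination (p : ℕ) :
    u₂ p = Fintype.linearCombination ℤ (gen p) ![0, (p : ℤ) ^ 3, (p : ℤ) ^ 2, 0, 1] := by
  simp [u₂, linearCombination_gen]

theorem u₃_eq_linearCombination (p a : ℕ) :
    u₃ p a = Fintype.linearCombination ℤ (gen p) ![0, 0, (p : ℤ) ^ 3, a * (p : ℤ) ^ 2, 0] := by
  simp [u₃, linearCombination_gen]

namespace C7

theorem exists_eq_linearCombination {p a : ℕ} {v : D7 p} (hv : v ∈ C7 p a) :
    ∃ α β γ : ℤ, v = Fintype.linearCombination ℤ (gen p)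
      ![p ^ 4 * α, p ^ 3 * β, p ^ 2 * β + p ^ 3 * γ, p * α + a * p ^ 2 * γ, α + β] := by
  rw [C7, ← Submodule.span_int_eq_addSubgroupClosure, Submodule.mem_toAddSubgroup,
    Submodule.mem_span_triple] at hv
  obtain ⟨α, β, γ, rfl⟩ := hv
  refine ⟨α, β, γ, ?_⟩
  rw [u₁_eq_linearCombination, u₂_eq_linearCombination, u₃_eq_linearCombination,
    ← map_smul, ← map_smul, ← map_smul, ← map_add, ← map_add]
  congr 1
  ext i
  fin_cases i <;> simp <;> ring

theorem pow_three_smul_eq_zero {p a : ℕ} {v : D7 p} (hv : v ∈ C7 p a) : p ^ 3 • v = 0 := by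
  suffices ((p : ℤ) ^ 3) • v = 0 by simpa [← natCast_zsmul] using this
  obtain ⟨α, β, γ, rfl⟩ := exists_eq_linearCombination hv
  rw [← map_smul, (isCyclicBasis_gen p).linearCombination_eq_zero_iff]
  have h₀ : (p : ℤ) ^ 7 ∣ p ^ 3 * (p ^ 4 * α) := ⟨α, by ring⟩
  have h₁ : (p : ℤ) ^ 6 ∣ p ^ 3 * (p ^ 3 * β) := ⟨β, by ring⟩
  have h₂ : (p : ℤ) ^ 4 ∣ p ^ 3 * (p ^ 2 * β + p ^ 3 * γ) := ⟨p * β + p ^ 2 * γ, by ring⟩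
  have h₄ : (p : ℤ) ∣ p ^ 3 * (α + β) := ⟨p ^ 2 * (α + β), by ring⟩
  simpa [Fin.forall_fin_succ, exponent] using ⟨h₀, h₁, h₂, h₄⟩

variable {p a b : ℕ} {N : Matrix (Fin 5) (Fin 5) ℤ} {f : Module.End ℤ (D7 p)}

theorem exists_pow_dvd_of_map_mem (hN : (powScaled (p : ℤ) exponent N).Represents (gen p) f)
    {y₀ y₁ y₂ y₃ y₄ : ℤ}
    (h : f (Fintype.linearCombination ℤ (gen p) ![y₀, y₁, y₂, y₃, y₄]) ∈ C7 p b) :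
    ∃ α β γ : ℤ,
      (p : ℤ) ^ 7 ∣ N 0 0 * y₀ + p * N 0 1 * y₁ + p ^ 3 * N 0 2 * y₂ + p ^ 4 * N 0 3 * y₃
        + p ^ 6 * N 0 4 * y₄ - p ^ 4 * α ∧
      (p : ℤ) ^ 6 ∣ N 1 0 * y₀ + N 1 1 * y₁ + p ^ 2 * N 1 2 * y₂ + p ^ 3 * N 1 3 * y₃
        + p ^ 5 * N 1 4 * y₄ - p ^ 3 * β ∧
      (p : ℤ) ^ 4 ∣ N 2 0 * y₀ + N 2 1 * y₁ + N 2 2 * y₂ + p * N 2 3 * y₃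
        + p ^ 3 * N 2 4 * y₄ - (p ^ 2 * β + p ^ 3 * γ) ∧
      (p : ℤ) ^ 3 ∣ N 3 0 * y₀ + N 3 1 * y₁ + N 3 2 * y₂ + N 3 3 * y₃
        + p ^ 2 * N 3 4 * y₄ - (p * α + b * p ^ 2 * γ) ∧
      (p : ℤ) ^ 1 ∣ N 4 0 * y₀ + N 4 1 * y₁ + N 4 2 * y₂ + N 4 3 * y₃ + N 4 4 * y₄
        - (α + β) := by
  obtain ⟨α, β, γ, h⟩ := exists_eq_linearCombination h
  rw [← hN.congr_fun, (isCyclicBasis_gen p).linearCombination_eq_iff] at h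
  refine ⟨α, β, γ, ?_⟩
  simpa [Fin.forall_fin_succ, Matrix.mulVec, dotProduct, Fin.sum_univ_five, powScaled, exponent]
    using h

-- In the three lemmas below each congruence is divided by the power `p ^ k` of `p` common to its
-- terms and then read modulo `p`; `t` collects the terms that vanish there.
theorem entries_eq_of_map_u₁_mem (hp : p ≠ 0)
    (hN : (powScaled (p : ℤ) exponent N).Represents (gen p) f) (h : f (u₁ p) ∈ C7 p b) :
    (N 3 3 : ZMod p) = N 0 0 ∧ (N 4 4 : ZMod p) = N 0 0 ∧ (N 2 3 : ZMod p) = 0 := by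
  rw [u₁_eq_linearCombination] at h
  obtain ⟨α, β, γ, h₀, h₁, h₂, h₃, h₄⟩ := exists_pow_dvd_of_map_mem hN h
  have h00 : (N 0 0 : ZMod p) = α :=
    intCast_eq_of_pow_dvd hp (k := 4) (t := N 0 3 + p * N 0 4) (by simp) h₀ (by ring)
  have hβ : ((0 : ℤ) : ZMod p) = β :=
    intCast_eq_of_pow_dvd hp (k := 3) (t := N 1 0 + N 1 3 + p * N 1 4) (by simp) h₁ (by ring)
  have h23 : (N 2 3 : ZMod p) = β :=
    intCast_eq_of_pow_dvd hp (k := 2) (t := p * N 2 0 + N 2 4 - γ) (by simp) h₂ (by ring)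
  have h33 : (N 3 3 : ZMod p) = α :=
    intCast_eq_of_pow_dvd hp (k := 1) (t := p ^ 2 * N 3 0 + N 3 4 - b * γ) (by simp) h₃ (by ring)
  have h44 : (N 4 4 : ZMod p) = (α + β : ℤ) :=
    intCast_eq_of_pow_dvd hp (k := 0) (t := p ^ 3 * N 4 0 + N 4 3) (by simp) h₄ (by ring)
  push_cast at hβ h44
  exact ⟨h33.trans h00.symm, by rw [h44, ← hβ, add_zero, h00], h23.trans hβ.symm⟩

theorem entries_eq_of_map_u₂_mem (hp : p ≠ 0)
    (hN : (powScaled (p : ℤ) exponent N).Represents (gen p) f) (h : f (u₂ p) ∈ C7 p b) :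
    (N 1 1 : ZMod p) = N 4 4 ∧ (N 2 2 : ZMod p) = N 4 4 := by
  rw [u₂_eq_linearCombination] at h
  obtain ⟨α, β, γ, -, h₁, h₂, h₃, h₄⟩ := exists_pow_dvd_of_map_mem hN h
  have h11 : (N 1 1 : ZMod p) = β :=
    intCast_eq_of_pow_dvd hp (k := 3) (t := N 1 2 + p * N 1 4) (by simp) h₁ (by ring)
  have h22 : (N 2 2 : ZMod p) = β :=
    intCast_eq_of_pow_dvd hp (k := 2) (t := N 2 1 + N 2 4 - γ) (by simp) h₂ (by ring)
  have hα : ((0 : ℤ) : ZMod p) = α :=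
    intCast_eq_of_pow_dvd hp (k := 1) (t := p * N 3 1 + N 3 2 + N 3 4 - b * γ) (by simp) h₃
      (by ring)
  have h44 : (N 4 4 : ZMod p) = (α + β : ℤ) :=
    intCast_eq_of_pow_dvd hp (k := 0) (t := p ^ 2 * N 4 1 + p * N 4 2) (by simp) h₄ (by ring)
  push_cast at hα h44
  rw [h11, h22, h44, ← hα, zero_add]
  exact ⟨rfl, rfl⟩

theorem entries_eq_of_map_u₃_mem (hp : p ≠ 0)
    (hN : (powScaled (p : ℤ) exponent N).Represents (gen p) f) (h : f (u₃ p a) ∈ C7 p b) :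
    (a * N 3 3 : ZMod p) = b * (N 2 2 + a * N 2 3) := by
  have hp' : (p : ℤ) ≠ 0 := mod_cast hp
  rw [u₃_eq_linearCombination] at h
  obtain ⟨α, β, γ, ⟨k, h₀⟩, ⟨l, h₁⟩, h₂, h₃, -⟩ := exists_pow_dvd_of_map_mem hN h
  obtain ⟨α, rfl⟩ : (p : ℤ) ^ 2 ∣ α :=
    ⟨N 0 2 + a * N 0 3 - p * k, mul_left_cancel₀ (pow_ne_zero 4 hp') (by linear_combination -h₀)⟩
  obtain ⟨β, rfl⟩ : (p : ℤ) ^ 2 ∣ β :=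
    ⟨N 1 2 + a * N 1 3 - p * l, mul_left_cancel₀ (pow_ne_zero 3 hp') (by linear_combination -h₁)⟩
  have hγ : ((N 2 2 + a * N 2 3 : ℤ) : ZMod p) = γ :=
    intCast_eq_of_pow_dvd hp (k := 3) (t := -β) (by simp) h₂ (by ring)
  have h33 : ((a * N 3 3 : ℤ) : ZMod p) = (b * γ : ℤ) :=
    intCast_eq_of_pow_dvd hp (k := 2) (t := N 3 2 - α) (by simp) h₃ (by ring)
  push_cast at hγ h33
  rw [h33, hγ]

theorem diag_eq_of_forall_map_mem (hp : p ≠ 0)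
    (hN : (powScaled (p : ℤ) exponent N).Represents (gen p) f)
    (hf : ∀ v ∈ C7 p a, f v ∈ C7 p b) :
    (∀ i, (N i i : ZMod p) = N 0 0) ∧ (a * N 0 0 : ZMod p) = b * N 0 0 := by
  have map_mem {v : D7 p} (hv : v ∈ ({u₁ p, u₂ p, u₃ p a} : Set (D7 p))) : f v ∈ C7 p b :=
    hf v (AddSubgroup.subset_closure hv)
  obtain ⟨h33, h44, h23⟩ := entries_eq_of_map_u₁_mem hp hN (map_mem (by simp))
  obtain ⟨h11, h22⟩ := entries_eq_of_map_u₂_mem hp hN (map_mem (by simp))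
  have hab := entries_eq_of_map_u₃_mem (a := a) hp hN (map_mem (by simp))
  rw [h44] at h11 h22
  refine ⟨?_, ?_⟩
  · simp [Fin.forall_fin_succ, h11, h22, h33, h44]
  · simpa [h33, h22, h23] using hab

theorem injective_or_injective_one_sub (hp : p.Prime) (hf : ∀ v ∈ C7 p a, f v ∈ C7 p a) :
    Injective f ∨ Injective ⇑(1 - f) := by
  have : Fact p.Prime := ⟨hp⟩
  have injective_of_ne_zero {g : Module.End ℤ (D7 p)} {L : Matrix (Fin 5) (Fin 5) ℤ}
      (hL : (powScaled (p : ℤ) exponent L).Represents (gen p) g)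
      (hg : ∀ v ∈ C7 p a, g v ∈ C7 p a) (h0 : (L 0 0 : ZMod p) ≠ 0) : Injective g :=
    (isCyclicBasis_gen p).injective_of_diag_ne_zero hp strictAnti_exponent hL fun i ↦ by
      rwa [(diag_eq_of_forall_map_mem hp.ne_zero hL hg).1 i]
  obtain ⟨N, hN⟩ := (isCyclicBasis_gen p).exists_powScaled_represents
    (Nat.cast_ne_zero.2 hp.ne_zero) f
  have hN' : (powScaled (p : ℤ) exponent (1 - N)).Represents (gen p) (1 - f) := by
    rw [powScaled_one_sub]
    exact represents_one_sub hN
  by_cases h0 : (N 0 0 : ZMod p) = 0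
  · refine .inr (injective_of_ne_zero hN' (fun v hv ↦ sub_mem hv (hf v hv)) ?_)
    simp [h0]
  · exact .inl (injective_of_ne_zero hN hf h0)

theorem eq_of_modEq (h : a ≡ b [MOD p]) : C7 p a = C7 p b := by
  have hu : u₃ p a = u₃ p b := by
    rw [u₃_eq_linearCombination, u₃_eq_linearCombination,
      (isCyclicBasis_gen p).linearCombination_eq_iff]
    obtain ⟨c, hc⟩ := h.symm.dvd
    have h₃ : (p : ℤ) ^ 3 ∣ a * p ^ 2 - b * p ^ 2 := ⟨c, by linear_combination (p : ℤ) ^ 2 * hc⟩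
    simpa [Fin.forall_fin_succ, exponent] using h₃
  rw [C7, C7, hu]

theorem addPairIndec (hp : p.Prime) (a : ℕ) : AddPairIndec (D7 p) (C7 p a) := by
  have : Fact (1 < p) := ⟨hp.one_lt⟩
  exact addPairIndec_of_injective_or_injective fun _ he ↦ injective_or_injective_one_sub hp he

theorem modEq_of_addPairIso (hp : p.Prime) (h : AddPairIso (D7 p) (C7 p a) (C7 p b)) :
    a ≡ b [MOD p] := by
  have : Fact p.Prime := ⟨hp⟩
  obtain ⟨e, he⟩ := h
  obtain ⟨N, hN⟩ := (isCyclicBasis_gen p).exists_powScaled_represents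
    (Nat.cast_ne_zero.2 hp.ne_zero) (e.toIntLinearEquiv : Module.End ℤ (D7 p))
  obtain ⟨-, hab⟩ := diag_eq_of_forall_map_mem hp.ne_zero hN fun v hv ↦
    he ▸ AddSubgroup.mem_map_of_mem _ hv
  have h0 : (N 0 0 : ZMod p) ≠ 0 :=
    (isCyclicBasis_gen p).diag_ne_zero_of_bijective hp strictAnti_exponent (by decide) hN
      e.bijective 0
  exact (ZMod.natCast_eq_natCast_iff _ _ _).1 (mul_right_cancel₀ h0 hab)

theorem addPairIso_iff (hp : p.Prime) :
    AddPairIso (D7 p) (C7 p a) (C7 p b) ↔ a ≡ b [MOD p] := by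
  refine ⟨modEq_of_addPairIso hp, fun h ↦ ⟨.refl _, ?_⟩⟩
  rw [eq_of_modEq h]
  exact AddSubgroup.map_id _

end C7

theorem birkhoff_family_S3_p7_general (p : ℕ) (hp : p.Prime) :
    (∀ b : D7 p, p ^ 7 • b = 0) ∧
    (∀ a : ℕ, ∀ x ∈ C7 p a, p ^ 3 • x = 0) ∧
    (∀ a : ℕ, AddPairIndec (D7 p) (C7 p a)) ∧
    (∀ a b : ℕ, AddPairIso (D7 p) (C7 p a) (C7 p b) ↔ a ≡ b [MOD p]) :=
  ⟨pow_seven_smul_eq_zero, fun _ _ ↦ C7.pow_three_smul_eq_zero, C7.addPairIndec hp,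
    fun _ _ ↦ C7.addPairIso_iff hp⟩

/-- **Corollary 15.**  For every `λ ∈ {0, …, p-1}`, `p³ • C_λ = 0`, so `(C_λ ≤ D)` is an
object of `S₃(ℤ/p⁷)`; each pair `(C_λ ≤ D)` is indecomposable, and for `λ ≠ μ` in
`{0, …, p-1}` the pairs `(C_λ ≤ D)` and `(C_μ ≤ D)` are not isomorphic. -/
theorem birkhoff_family_S3_p7 (p : ℕ) (hp : p.Prime) :
    (∀ b : D7 p, p ^ 7 • b = 0) ∧
    (∀ a : ℕ, ∀ x ∈ C7 p a, p ^ 3 • x = 0) ∧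
    (∀ a : ℕ, a < p → AddPairIndec (D7 p) (C7 p a)) ∧
    (∀ a b : ℕ, a < p → b < p → a ≠ b → ¬ AddPairIso (D7 p) (C7 p a) (C7 p b)) := by
  obtain ⟨hD, hC, hindec, hiso⟩ := birkhoff_family_S3_p7_general p hp
  exact ⟨hD, hC, fun a _ ↦ hindec a, fun a b ha hb hab h ↦
    hab (((hiso a b).1 h).eq_of_lt_of_lt ha hb)⟩
end

section
/- Let p be a prime and let B = ℤ/p^6 × ℤ/p^4 × ℤ/p^2, with x, y, z the canonical generators of the three factors. For an integer λ let A_λ be the subgroup of B generated by u = p^2 x + p y + z and v = p^2 y + λ p z. Then p^4·A_λ = 0, so (A_λ, B) is an object of S_4(ℤ/p^6); for every λ ∈ {0, 1, …, p−1} the pair (A_λ, B) is indecomposable, and for λ, μ ∈ {0, 1, …, p−1} with λ ≠ μ the pairs (A_λ, B) and (A_μ, B) are not isomorphic. In particular, the number of isomorphism classes of subgroup embeddings (A, B) with this fixed group B is at least p. -/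
/-- The group `B = ℤ/p⁶ × ℤ/p⁴ × ℤ/p²`. -/
abbrev B6 (p : ℕ) : Type := ZMod (p ^ 6) × ZMod (p ^ 4) × ZMod (p ^ 2)

/-- `u = p²x + py + z`. -/
def uB (p : ℕ) : B6 p := ((p : ZMod (p ^ 6)) ^ 2, (p : ZMod (p ^ 4)), 1)

/-- `v = p²y + λpz`. -/
def vB (p a : ℕ) : B6 p := (0, (p : ZMod (p ^ 4)) ^ 2, (a : ZMod (p ^ 2)) * (p : ZMod (p ^ 2)))

/-- The subgroup `A_λ = ⟨u, v⟩` of `B`. -/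
def A6 (p a : ℕ) : AddSubgroup (B6 p) := AddSubgroup.closure {uB p, vB p a}

/-!
Write `n` for `p`, or for any prime power in its place. The fully invariant subgroups
`B ⊇ nB + B[n⁴] ⊇ nB + B[n²] ⊇ nB` have successive quotients generated by `x`, by `y` and by `z`.
Let an endomorphism `f` of `B` satisfy `f u = m u + c v`, and put `g = f - m`, so that `g u = c v`.
Since `n²u = n⁴x + n³y`, `u ≡ z` and `v ≡ 0` modulo `nB`, and `n²v = 0`, the map `g` lowers the
filtration; that is, `f` acts on all three quotients as the same scalar `m`, and `g` is nilpotent.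

If `f` is idempotent then `m² ≡ m`, so `m` is `0` or `1` modulo the prime power `n`; then `f` or
`1 - f` is a nilpotent idempotent, hence zero. If `f` is an automorphism carrying `⟨u, v_a⟩` to
`⟨u, v_b⟩` then `m` is a unit modulo `n`, and comparing the coordinates of `f v_a` with those of an
element of `⟨u, v_b⟩` gives `m a ≡ m b`.
-/

section Layers

variable {B C : Type*} [AddCommGroup B] [AddCommGroup C] {n k l : ℕ}

/-- The subgroup `nB + B[nᵏ]` of an abelian group `B`. It is fully invariant, so that endomorphisms
of `B` can be compared through their action on the quotients of successive layers. -/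
def layer (B : Type*) [AddCommGroup B] (n k : ℕ) : AddSubgroup B :=
  (nsmulAddMonoidHom n).range ⊔ (nsmulAddMonoidHom (n ^ k)).ker

theorem mem_layer {b : B} : b ∈ layer B n k ↔ ∃ c d : B, n ^ k • d = 0 ∧ n • c + d = b := by
  simp [layer, AddSubgroup.mem_sup]

theorem nsmul_mem_layer (n k : ℕ) (b : B) : n • b ∈ layer B n k :=
  mem_layer.2 ⟨b, 0, smul_zero _, add_zero _⟩

theorem mem_layer_of_pow_nsmul_eq_zero {b : B} (hb : n ^ k • b = 0) : b ∈ layer B n k :=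
  mem_layer.2 ⟨0, b, hb, by rw [smul_zero, zero_add]⟩

theorem map_mem_layer (f : B →+ C) {b : B} (hb : b ∈ layer B n k) : f b ∈ layer C n k := by
  obtain ⟨c, d, hd, rfl⟩ := mem_layer.1 hb
  exact mem_layer.2 ⟨f c, f d, by rw [← map_nsmul, hd, map_zero], by rw [map_add, map_nsmul]⟩

theorem layer_mono (h : k ≤ l) : layer B n k ≤ layer B n l := by
  intro b hb
  obtain ⟨c, d, hd, rfl⟩ := mem_layer.1 hb
  refine mem_layer.2 ⟨c, d, ?_, rfl⟩
  rw [← Nat.sub_add_cancel h, pow_add, mul_smul, hd, smul_zero]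

theorem zsmul_mem_layer_of_dvd {m : ℤ} (hm : (n : ℤ) ∣ m) (b : B) : m • b ∈ layer B n k := by
  obtain ⟨c, rfl⟩ := hm
  rw [mul_smul, natCast_zsmul]
  exact nsmul_mem_layer n k _

theorem mem_layer_zero {b : B} : b ∈ layer B n 0 ↔ ∃ c, n • c = b := by
  simp [mem_layer]

theorem mem_layer_prod {w : B × C} :
    w ∈ layer (B × C) n k ↔ w.1 ∈ layer B n k ∧ w.2 ∈ layer C n k := by
  refine ⟨fun hw => ⟨map_mem_layer (.fst B C) hw, map_mem_layer (.snd B C) hw⟩, fun ⟨h₁, h₂⟩ => ?_⟩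
  simpa using add_mem (map_mem_layer (.inl B C) h₁) (map_mem_layer (.inr B C) h₂)

/-- The ideal of the endomorphisms of `B` that move each layer `nB + B[n²ⁱ⁺²]` into the next
smaller one, `nB + B[n²ⁱ]`. The step is two because consecutive exponents of the cyclic factors of
`ℤ/n⁶ × ℤ/n⁴ × ℤ/n²` differ by two. -/
def layerIdeal (B : Type*) [AddCommGroup B] (n : ℕ) : TwoSidedIdeal (AddMonoid.End B) :=
  .mk' {f | ∀ i, ∀ b ∈ layer B n (2 * (i + 1)), f b ∈ layer B n (2 * i)}
    (fun _ _ _ => zero_mem _)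
    (fun hf hg i b hb => add_mem (hf i b hb) (hg i b hb))
    (fun hf i b hb => neg_mem (hf i b hb))
    (fun {f _} hg i b hb => map_mem_layer f (hg i b hb))
    (fun {_ g} hf i b hb => hf i (g b) (map_mem_layer g hb))

theorem mem_layerIdeal {f : AddMonoid.End B} :
    f ∈ layerIdeal B n ↔ ∀ i, ∀ b ∈ layer B n (2 * (i + 1)), f b ∈ layer B n (2 * i) :=
  TwoSidedIdeal.mem_mk' ..

theorem intCast_mem_layerIdeal {m : ℤ} (hm : (n : ℤ) ∣ m) :
    (m : AddMonoid.End B) ∈ layerIdeal B n :=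
  mem_layerIdeal.2 fun _ b _ => zsmul_mem_layer_of_dvd hm b

theorem pow_apply_mem_layer_zero {f : AddMonoid.End B} (hf : f ∈ layerIdeal B n) (i : ℕ) {b : B}
    (hb : b ∈ layer B n (2 * i)) : (f ^ i) b ∈ layer B n 0 := by
  induction i generalizing b with
  | zero => exact hb
  | succ i ih =>
    rw [pow_succ, AddMonoid.End.coe_mul, Function.comp_apply]
    exact ih (mem_layerIdeal.1 hf i b hb)

theorem isNilpotent_of_forall_mem_layer_zero (hB : ∀ b : B, n ^ k • b = 0) {f : AddMonoid.End B}
    (hf : ∀ b, f b ∈ layer B n 0) : IsNilpotent f := by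
  have hpow : ∀ (j : ℕ) (b : B), ∃ c, n ^ j • c = (f ^ j) b := by
    intro j
    induction j with
    | zero => exact fun b => ⟨b, by simp⟩
    | succ j ih =>
      intro b
      obtain ⟨c, hc⟩ := ih b
      obtain ⟨d, hd⟩ := mem_layer_zero.1 (hf c)
      exact ⟨d, by rw [pow_succ, mul_smul, hd, ← map_nsmul, hc, pow_succ', AddMonoid.End.coe_mul,
        Function.comp_apply]⟩
  refine ⟨k, AddMonoid.End.ext _ fun b => ?_⟩
  obtain ⟨c, hc⟩ := hpow k b
  rw [← hc, hB, AddMonoid.End.zero_apply]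

theorem isNilpotent_of_mem_layerIdeal (hB : ∀ b : B, n ^ k • b = 0) {f : AddMonoid.End B}
    (hf : f ∈ layerIdeal B n) : IsNilpotent f := by
  refine IsNilpotent.of_pow (m := k) (isNilpotent_of_forall_mem_layer_zero hB fun b => ?_)
  refine pow_apply_mem_layer_zero hf k (mem_layer_of_pow_nsmul_eq_zero ?_)
  rw [two_mul, pow_add, mul_smul, hB]

end Layers

section ZModPow

variable {n e k : ℕ}

theorem natCast_pow_zmod_eq_zero (h : e ≤ k) : (n : ZMod (n ^ e)) ^ k = 0 := by
  exact_mod_cast (ZMod.natCast_eq_zero_iff _ _).2 (pow_dvd_pow n h)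

theorem pow_nsmul_zmod_eq_zero (h : e ≤ k) (a : ZMod (n ^ e)) : n ^ k • a = 0 := by
  rw [nsmul_eq_mul, Nat.cast_pow, natCast_pow_zmod_eq_zero h, zero_mul]

theorem pow_mul_intCast_zmod_eq_zero_iff [NeZero n] (h : k ≤ e) (m : ℤ) :
    (n : ZMod (n ^ e)) ^ k * m = 0 ↔ (n : ℤ) ^ (e - k) ∣ m := by
  have hn : (n : ℤ) ^ k ≠ 0 := pow_ne_zero k (NeZero.ne _)
  rw [← mul_dvd_mul_iff_left hn, ← pow_add, Nat.add_sub_cancel' h]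
  exact_mod_cast ZMod.intCast_zmod_eq_zero_iff_dvd ((n : ℤ) ^ k * m) (n ^ e)

theorem intCast_mem_layer_zmod [NeZero n] (h : k < e) {m : ℤ} :
    (m : ZMod (n ^ e)) ∈ layer (ZMod (n ^ e)) n k ↔ (n : ℤ) ∣ m := by
  constructor
  · intro hm
    obtain ⟨c, d, hd, hcd⟩ := mem_layer.1 hm
    obtain ⟨c, rfl⟩ := ZMod.intCast_surjective c
    obtain ⟨d, rfl⟩ := ZMod.intCast_surjective d
    rw [nsmul_eq_mul, Nat.cast_pow, pow_mul_intCast_zmod_eq_zero_iff h.le] at hd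
    have hnd : (n : ℤ) ∣ d := (dvd_pow_self _ (Nat.sub_ne_zero_of_lt h)).trans hd
    have hnm : (n : ℤ) ∣ m - (n * c + d) := by
      refine (dvd_pow_self (n : ℤ) h.ne_bot).trans ?_
      rw [← Nat.cast_pow, ← ZMod.intCast_zmod_eq_zero_iff_dvd]
      simp [← hcd]
    exact (dvd_iff_dvd_of_dvd_sub hnm).2 (dvd_add (dvd_mul_right _ _) hnd)
  · rintro ⟨c, rfl⟩
    simpa using nsmul_mem_layer n k (c : ZMod (n ^ e))

theorem mem_layer_zmod_of_le (h : e ≤ k) (a : ZMod (n ^ e)) : a ∈ layer (ZMod (n ^ e)) n k :=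
  mem_layer_of_pow_nsmul_eq_zero (pow_nsmul_zmod_eq_zero h a)

end ZModPow

theorem natCast_dvd_or_dvd_of_isPrimePow_of_isCoprime {n : ℕ} (hn : IsPrimePow n) {a b : ℤ}
    (hab : IsCoprime a b) (h : (n : ℤ) ∣ a * b) : (n : ℤ) ∣ a ∨ (n : ℤ) ∣ b := by
  rw [Int.natCast_dvd, Int.natAbs_mul] at h
  simpa only [Int.natCast_dvd] using
    ((Int.isCoprime_iff_nat_coprime.1 hab).isPrimePow_dvd_mul hn).1 h

theorem sub_intCast_apply {B : Type*} [AddCommGroup B] (f : AddMonoid.End B) (m : ℤ) (b : B) :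
    (f - (m : AddMonoid.End B)) b = f b - m • b :=
  rfl

section Pairs

variable {B : Type} [AddCommGroup B] {A A' : AddSubgroup B}

theorem AddPairIndec.of_forall_isIdempotentElem [Nontrivial B]
    (h : ∀ f : AddMonoid.End B, IsIdempotentElem f → (∀ b ∈ A, f b ∈ A) → f = 0 ∨ f = 1) :
    AddPairIndec B A := by
  refine ⟨exists_ne 0, fun B₁ B₂ hinf hsup hA => ?_⟩
  have hc : IsCompl (AddSubgroup.toIntSubmodule B₁) (AddSubgroup.toIntSubmodule B₂) :=
    (IsCompl.of_eq hinf hsup).map AddSubgroup.toIntSubmodule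
  let f : AddMonoid.End B := (Submodule.projection _ _ hc).toAddMonoidHom
  have hf₁ : ∀ b ∈ B₁, f b = b := fun b hb => Submodule.projection_apply_of_mem_left hc hb
  have hf₂ : ∀ b ∈ B₂, f b = 0 := fun b hb => Submodule.projection_apply_of_mem_right hc hb
  have hidem : IsIdempotentElem f :=
    AddMonoid.End.ext _ fun b => hf₁ _ (Submodule.projection_apply_mem hc b)
  have hfA : ∀ b ∈ A, f b ∈ A := by
    intro b hb
    rw [hA] at hb
    obtain ⟨c, hcB, d, hdB, rfl⟩ := AddSubgroup.mem_sup.1 hb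
    rw [map_add, hf₁ c hcB.2, hf₂ d hdB.2, add_zero]
    exact hcB.1
  rcases h f hidem hfA with h0 | h1
  · exact .inl <| (AddSubgroup.eq_bot_iff_forall _).2 fun b hb => by
      rw [← hf₁ b hb, h0, AddMonoid.End.zero_apply]
  · exact .inr <| (AddSubgroup.eq_bot_iff_forall _).2 fun b hb => by
      rw [← hf₂ b hb, h1, AddMonoid.End.one_apply]

theorem AddPairIso.exists_mul_eq_one (h : AddPairIso B A A') :
    ∃ f g : AddMonoid.End B, f * g = 1 ∧ (∀ b ∈ A, f b ∈ A') ∧ ∀ b ∈ A', g b ∈ A := by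
  obtain ⟨e, rfl⟩ := h
  refine ⟨e.toAddMonoidHom, e.symm.toAddMonoidHom, AddMonoid.End.ext _ e.apply_symm_apply,
    fun b hb => AddSubgroup.mem_map_of_mem _ hb, ?_⟩
  rintro _ ⟨b, hb, rfl⟩
  rwa [← e.symm_apply_apply b] at hb

end Pairs

section Family

variable {n k a b : ℕ} {f : AddMonoid.End (B6 n)} {m : ℤ}

/-- The generator `x` of the factor `ℤ/p⁶` of `B`. -/
def xB (p : ℕ) : B6 p := (1, 0, 0)

/-- The generator `y` of the factor `ℤ/p⁴` of `B`. -/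
def yB (p : ℕ) : B6 p := (0, 1, 0)

/-- The generator `z` of the factor `ℤ/p²` of `B`. -/
def zB (p : ℕ) : B6 p := (0, 0, 1)

theorem exists_eq_zsmul_add (w : B6 n) :
    ∃ i j k : ℤ, w = i • xB n + j • yB n + k • zB n := by
  obtain ⟨w₁, w₂, w₃⟩ := w
  obtain ⟨i, rfl⟩ := ZMod.intCast_surjective w₁
  obtain ⟨j, rfl⟩ := ZMod.intCast_surjective w₂
  obtain ⟨k, rfl⟩ := ZMod.intCast_surjective w₃
  exact ⟨i, j, k, by simp [xB, yB, zB]⟩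

theorem pow_six_nsmul_B6 (w : B6 n) : n ^ 6 • w = 0 := by
  ext <;> exact pow_nsmul_zmod_eq_zero (by decide) _

theorem uB_eq (n : ℕ) : uB n = n ^ 2 • xB n + n • yB n + zB n := by
  simp [uB, xB, yB, zB]

theorem vB_eq (n a : ℕ) : vB n a = n ^ 2 • yB n + (a * n) • zB n := by
  simp [vB, yB, zB]

theorem pow_two_nsmul_uB (n : ℕ) : n ^ 2 • uB n = n ^ 4 • xB n + n ^ 3 • yB n := by
  ext <;> simp [uB, xB, yB, ← pow_add, ← pow_succ]

theorem pow_two_nsmul_vB (n a : ℕ) : n ^ 2 • vB n a = 0 := by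
  ext <;> simp [vB, ← pow_add, natCast_pow_zmod_eq_zero]

theorem pow_two_nsmul_zB (n : ℕ) : n ^ 2 • zB n = 0 := by
  ext <;> simp [zB]

theorem pow_four_nsmul_yB (n : ℕ) : n ^ 4 • yB n = 0 := by
  ext <;> simp [yB]

theorem uB_mem_A6 (n a : ℕ) : uB n ∈ A6 n a :=
  AddSubgroup.subset_closure (.inl rfl)

theorem vB_mem_A6 (n a : ℕ) : vB n a ∈ A6 n a :=
  AddSubgroup.subset_closure (.inr rfl)

theorem pow_four_nsmul_of_mem_A6 {w : B6 n} (hw : w ∈ A6 n a) : n ^ 4 • w = 0 := by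
  suffices h : A6 n a ≤ (nsmulAddMonoidHom (n ^ 4)).ker from h hw
  rw [A6, AddSubgroup.closure_le, Set.insert_subset_iff, Set.singleton_subset_iff]
  constructor <;> ext <;> simp [uB, vB, ← pow_add, natCast_pow_zmod_eq_zero]

theorem A6_eq_of_modEq (h : a ≡ b [MOD n]) : A6 n a = A6 n b := by
  have hab : (a * n : ZMod (n ^ 2)) = b * n := by
    exact_mod_cast (ZMod.natCast_eq_natCast_iff _ _ _).2 (sq n ▸ h.mul_right' n)
  rw [A6, A6, vB, vB, hab]

theorem zsmul_add_eq_zero_iff {i j l : ℤ} : i • xB n + j • yB n + l • zB n = 0 ↔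
    (n : ℤ) ^ 6 ∣ i ∧ (n : ℤ) ^ 4 ∣ j ∧ (n : ℤ) ^ 2 ∣ l := by
  simp [xB, yB, zB, ZMod.intCast_zmod_eq_zero_iff_dvd]

variable [NeZero n]

theorem zsmul_add_mem_layer_iff_of_four_le (h₄ : 4 ≤ k) (h₆ : k < 6) {i j l : ℤ} :
    i • xB n + j • yB n + l • zB n ∈ layer (B6 n) n k ↔ (n : ℤ) ∣ i := by
  simp [xB, yB, zB, mem_layer_prod, intCast_mem_layer_zmod h₆, mem_layer_zmod_of_le h₄,
    mem_layer_zmod_of_le (h₄.trans' (by decide : 2 ≤ 4))]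

theorem zsmul_add_mem_layer_iff_of_two_le (h₂ : 2 ≤ k) (h₄ : k < 4) {i j l : ℤ} :
    i • xB n + j • yB n + l • zB n ∈ layer (B6 n) n k ↔ (n : ℤ) ∣ i ∧ (n : ℤ) ∣ j := by
  simp [xB, yB, zB, mem_layer_prod, intCast_mem_layer_zmod h₄,
    intCast_mem_layer_zmod (h₄.trans (by decide : 4 < 6)), mem_layer_zmod_of_le h₂]

theorem mem_layer_four_of_mem_layer_five {w : B6 n} (hw : w ∈ layer (B6 n) n 5) :
    w ∈ layer (B6 n) n 4 := by
  obtain ⟨i, j, l, rfl⟩ := exists_eq_zsmul_add w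
  rw [zsmul_add_mem_layer_iff_of_four_le (by decide) (by decide)] at hw ⊢
  exact hw

theorem mem_layer_two_of_mem_layer_three {w : B6 n} (hw : w ∈ layer (B6 n) n 3) :
    w ∈ layer (B6 n) n 2 := by
  obtain ⟨i, j, l, rfl⟩ := exists_eq_zsmul_add w
  rw [zsmul_add_mem_layer_iff_of_two_le (by decide) (by decide)] at hw ⊢
  exact hw

theorem mem_layerIdeal_of_generators (hx : f (xB n) ∈ layer (B6 n) n 4)
    (hy : f (yB n) ∈ layer (B6 n) n 2) (hz : f (zB n) ∈ layer (B6 n) n 0) :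
    f ∈ layerIdeal (B6 n) n := by
  refine mem_layerIdeal.2 fun i w hw => ?_
  obtain ⟨r, s, t, rfl⟩ := exists_eq_zsmul_add w
  simp only [map_add, map_zsmul]
  match i with
  | 0 =>
    obtain ⟨hr, hs⟩ := (zsmul_add_mem_layer_iff_of_two_le (by decide) (by decide)).1 hw
    exact add_mem (add_mem (zsmul_mem_layer_of_dvd hr _) (zsmul_mem_layer_of_dvd hs _))
      (zsmul_mem hz t)
  | 1 =>
    have hr := (zsmul_add_mem_layer_iff_of_four_le (by decide) (by decide)).1 hw
    exact add_mem (add_mem (zsmul_mem_layer_of_dvd hr _) (zsmul_mem hy s))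
      (zsmul_mem (layer_mono (by decide) hz) t)
  | 2 =>
    exact add_mem (add_mem (zsmul_mem hx r) (zsmul_mem (layer_mono (by decide) hy) s))
      (zsmul_mem (layer_mono (by decide) hz) t)
  | i + 3 =>
    refine layer_mono (by lia : 6 ≤ 2 * (i + 3)) (mem_layer_of_pow_nsmul_eq_zero ?_)
    exact pow_six_nsmul_B6 _

theorem intCast_mem_layerIdeal_iff :
    (m : AddMonoid.End (B6 n)) ∈ layerIdeal (B6 n) n ↔ (n : ℤ) ∣ m := by
  refine ⟨fun hm => ?_, intCast_mem_layerIdeal⟩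
  have hx : m • xB n ∈ layer (B6 n) n 4 :=
    mem_layerIdeal.1 hm 2 (xB n) (mem_layer_of_pow_nsmul_eq_zero (pow_six_nsmul_B6 _))
  simpa using (zsmul_add_mem_layer_iff_of_four_le (i := m) (j := 0) (l := 0)
    le_rfl (by decide)).1 (by simpa using hx)

theorem exists_sub_intCast_mem_layerIdeal (hf : f (uB n) ∈ A6 n a) :
    ∃ m : ℤ, f - (m : AddMonoid.End (B6 n)) ∈ layerIdeal (B6 n) n := by
  obtain ⟨m, c, hmc⟩ := AddSubgroup.mem_closure_pair.1 hf
  refine ⟨m, ?_⟩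
  set g := f - (m : AddMonoid.End (B6 n)) with hg
  have hgu : g (uB n) = c • vB n a := by
    rw [hg, sub_intCast_apply, ← hmc, add_sub_cancel_left]
  have hgxy : n ^ 4 • g (xB n) + n ^ 3 • g (yB n) = 0 := by
    rw [← map_nsmul, ← map_nsmul, ← map_add, ← pow_two_nsmul_uB, map_nsmul, hgu, smul_comm,
      pow_two_nsmul_vB, smul_zero]
  have hgy : n ^ 4 • g (yB n) = 0 := by rw [← map_nsmul, pow_four_nsmul_yB, map_zero]
  refine mem_layerIdeal_of_generators ?_ ?_ ?_
  · refine mem_layer_four_of_mem_layer_five (mem_layer_of_pow_nsmul_eq_zero ?_)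
    linear_combination n • hgxy - hgy
  · have h : n • g (xB n) + g (yB n) ∈ layer (B6 n) n 2 := by
      refine mem_layer_two_of_mem_layer_three (mem_layer_of_pow_nsmul_eq_zero ?_)
      rw [smul_add, smul_smul, ← pow_succ, hgxy]
    exact (add_mem_cancel_left (nsmul_mem_layer n 2 _)).1 h
  · refine mem_layer_zero.2 ⟨c • (n • yB n + a • zB n) - n • g (xB n) - g (yB n), ?_⟩
    rw [uB_eq, vB_eq, map_add, map_add, map_nsmul, map_nsmul] at hgu
    linear_combination -hgu

theorem pow_two_dvd_of_pow_two_nsmul_eq_zero {i j : ℤ} (h : n ^ 2 • (i • uB n + j • vB n a) = 0) :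
    (n : ℤ) ^ 2 ∣ i := by
  have hn : (n : ℤ) ^ 4 ≠ 0 := pow_ne_zero 4 (NeZero.ne _)
  rw [smul_add, smul_comm, pow_two_nsmul_uB, smul_comm _ j, pow_two_nsmul_vB] at h
  have hcoord : (i * n ^ 4) • xB n + (i * n ^ 3) • yB n + (0 : ℤ) • zB n = 0 := by
    linear_combination (norm := module) h
  have hdvd := (zsmul_add_eq_zero_iff.1 hcoord).1
  rwa [show (n : ℤ) ^ 6 = n ^ 2 * n ^ 4 by ring, mul_dvd_mul_iff_right hn] at hdvd

theorem exists_mem_layer_two_of_mem_layerIdeal (hf : f ∈ layerIdeal (B6 n) n) (a : ℕ) :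
    ∃ w ∈ layer (B6 n) n 2, f (vB n a) = n ^ 2 • w := by
  have hy : f (yB n) ∈ layer (B6 n) n 2 :=
    mem_layerIdeal.1 hf 1 _ (mem_layer_of_pow_nsmul_eq_zero (pow_four_nsmul_yB n))
  have hz : f (zB n) ∈ layer (B6 n) n 0 :=
    mem_layerIdeal.1 hf 0 _ (mem_layer_of_pow_nsmul_eq_zero (pow_two_nsmul_zB n))
  obtain ⟨d, hd⟩ := mem_layer_zero.1 hz
  have hd₂ : d ∈ layer (B6 n) n 2 := by
    refine mem_layer_two_of_mem_layer_three (mem_layer_of_pow_nsmul_eq_zero ?_)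
    calc
      n ^ 3 • d = n ^ 2 • n • d := by module
      _ = 0 := by rw [hd, ← map_nsmul, pow_two_nsmul_zB, map_zero]
  refine ⟨f (yB n) + a • d, add_mem hy (nsmul_mem hd₂ a), ?_⟩
  rw [vB_eq, map_add, map_nsmul, map_nsmul, ← hd]
  module

theorem mul_modEq_mul_of_map_A6 (hm : f - (m : AddMonoid.End (B6 n)) ∈ layerIdeal (B6 n) n)
    (hf : f (vB n a) ∈ A6 n b) : m * a ≡ m * b [ZMOD n] := by
  have hn : (n : ℤ) ≠ 0 := NeZero.ne _
  obtain ⟨r, s, hrs⟩ := AddSubgroup.mem_closure_pair.1 hf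
  obtain ⟨c, rfl⟩ : (n : ℤ) ^ 2 ∣ r := pow_two_dvd_of_pow_two_nsmul_eq_zero (a := b) (j := s) <| by
    rw [hrs, ← map_nsmul, pow_two_nsmul_vB, map_zero]
  obtain ⟨w, hw, hgv⟩ := exists_mem_layer_two_of_mem_layerIdeal hm a
  obtain ⟨i, j, l, rfl⟩ := exists_eq_zsmul_add w
  obtain ⟨-, j, rfl⟩ := (zsmul_add_mem_layer_iff_of_two_le le_rfl (by decide)).1 hw
  have hcoord : (c * n ^ 4 - n ^ 2 * i) • xB n + (n ^ 2 * (c * n + (s - m) - n * j)) • yB n +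
      (n * ((s * b - m * a) - n * l)) • zB n = 0 := by
    rw [sub_intCast_apply, ← hrs, mul_smul _ c, smul_comm _ c, ← Nat.cast_pow, natCast_zsmul,
      pow_two_nsmul_uB, vB_eq, vB_eq] at hgv
    linear_combination (norm := module) hgv
  obtain ⟨-, hy, hz⟩ := zsmul_add_eq_zero_iff.1 hcoord
  rw [show (n : ℤ) ^ 4 = n ^ 2 * n ^ 2 by ring, mul_dvd_mul_iff_left (pow_ne_zero 2 hn)] at hy
  rw [sq, mul_dvd_mul_iff_left hn] at hz
  have hsm : s ≡ m [ZMOD n] := by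
    refine (Int.modEq_iff_dvd.2 ?_).symm
    obtain ⟨t, ht⟩ := hy
    exact ⟨n * t - c + j, by linear_combination ht⟩
  have hsb : m * a ≡ s * b [ZMOD n] := by
    refine Int.modEq_iff_dvd.2 ?_
    obtain ⟨t, ht⟩ := hz
    exact ⟨t + l, by linear_combination ht⟩
  exact hsb.trans (hsm.mul_right b)

theorem modEq_of_addPairIso (h : AddPairIso (B6 n) (A6 n a) (A6 n b)) : a ≡ b [MOD n] := by
  obtain ⟨f, g, hfg, hf, hg⟩ := h.exists_mul_eq_one
  obtain ⟨r, hr⟩ := exists_sub_intCast_mem_layerIdeal (hf _ (uB_mem_A6 n a))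
  obtain ⟨s, hs⟩ := exists_sub_intCast_mem_layerIdeal (hg _ (uB_mem_A6 n b))
  have hrs : r * s ≡ 1 [ZMOD n] := by
    refine (Int.modEq_iff_dvd.2 (intCast_mem_layerIdeal_iff.1 ?_)).symm
    have hmul := (layerIdeal (B6 n) n).ringCon.mul
      ((TwoSidedIdeal.rel_iff ..).2 hr) ((TwoSidedIdeal.rel_iff ..).2 hs)
    rw [hfg, TwoSidedIdeal.rel_iff, ← neg_mem_iff, neg_sub] at hmul
    exact_mod_cast hmul
  have hab := (mul_modEq_mul_of_map_A6 hr (hf _ (vB_mem_A6 n a))).mul_left s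
  rw [← mul_assoc, ← mul_assoc, mul_comm s r] at hab
  refine Int.natCast_modEq_iff.1 ?_
  simpa using ((hrs.mul_right a).symm.trans hab).trans (hrs.mul_right b)

theorem addPairIso_A6_iff :
    AddPairIso (B6 n) (A6 n a) (A6 n b) ↔ a ≡ b [MOD n] := by
  refine ⟨modEq_of_addPairIso, fun h => ⟨AddEquiv.refl _, ?_⟩⟩
  rw [A6_eq_of_modEq h]
  exact AddSubgroup.map_id _

end Family

theorem addPairIndec_A6 {n : ℕ} (hn : IsPrimePow n) (a : ℕ) : AddPairIndec (B6 n) (A6 n a) := by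
  have : NeZero n := ⟨hn.ne_zero⟩
  have : Fact (1 < n ^ 2) := ⟨Nat.one_lt_pow two_ne_zero hn.one_lt⟩
  have eq_zero_of_mem : ∀ g ∈ layerIdeal (B6 n) n, IsIdempotentElem g → g = 0 := fun g hg hidem =>
    hidem.eq_zero_of_isNilpotent (isNilpotent_of_mem_layerIdeal pow_six_nsmul_B6 hg)
  refine .of_forall_isIdempotentElem fun f hidem hf => ?_
  obtain ⟨m, hm⟩ := exists_sub_intCast_mem_layerIdeal (hf _ (uB_mem_A6 n a))
  have hmm : (n : ℤ) ∣ m * (m - 1) := by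
    refine intCast_mem_layerIdeal_iff.1 ?_
    have hrel := (TwoSidedIdeal.rel_iff ..).2 hm
    have hmul := (layerIdeal (B6 n) n).ringCon.mul hrel hrel
    rw [hidem.eq] at hmul
    have hsub := (layerIdeal (B6 n) n).sub_mem hm ((TwoSidedIdeal.rel_iff ..).1 hmul)
    convert hsub using 1
    push_cast
    rw [mul_sub, mul_one]
    abel
  rcases natCast_dvd_or_dvd_of_isPrimePow_of_isCoprime hn ⟨1, -1, by ring⟩ hmm with h0 | h1
  · left
    refine eq_zero_of_mem f ?_ hidem
    simpa using add_mem hm (intCast_mem_layerIdeal h0)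
  · right
    refine (sub_eq_zero.1 (eq_zero_of_mem (1 - f) ?_ hidem.one_sub)).symm
    simpa using neg_mem (add_mem hm (intCast_mem_layerIdeal h1))

theorem birkhoff_family_S4_p6_general (n : ℕ) (hn : IsPrimePow n) :
    (∀ b : B6 n, n ^ 6 • b = 0) ∧
    (∀ a : ℕ, ∀ x ∈ A6 n a, n ^ 4 • x = 0) ∧
    (∀ a : ℕ, AddPairIndec (B6 n) (A6 n a)) ∧
    (∀ a b : ℕ, AddPairIso (B6 n) (A6 n a) (A6 n b) ↔ a ≡ b [MOD n]) :=
  have : NeZero n := ⟨hn.ne_zero⟩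
  ⟨pow_six_nsmul_B6, fun _ _ => pow_four_nsmul_of_mem_A6, addPairIndec_A6 hn,
    fun _ _ => addPairIso_A6_iff⟩

/-- **Birkhoff's family.**  For every `λ ∈ {0, …, p-1}`, `p⁴ • A_λ = 0`, so `(A_λ ≤ B)` is
an object of `S₄(ℤ/p⁶)`; each pair `(A_λ ≤ B)` is indecomposable, and for `λ ≠ μ` in
`{0, …, p-1}` the pairs `(A_λ ≤ B)` and `(A_μ ≤ B)` are not isomorphic.  In particular the
number of isomorphism classes of subgroup embeddings with this fixed ambient group `B` is
at least `p`. -/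
theorem birkhoff_family_S4_p6 (p : ℕ) (hp : p.Prime) :
    (∀ b : B6 p, p ^ 6 • b = 0) ∧
    (∀ a : ℕ, ∀ x ∈ A6 p a, p ^ 4 • x = 0) ∧
    (∀ a : ℕ, a < p → AddPairIndec (B6 p) (A6 p a)) ∧
    (∀ a b : ℕ, a < p → b < p → a ≠ b → ¬ AddPairIso (B6 p) (A6 p a) (A6 p b)) := by
  obtain ⟨hB, hA, hindec, hiso⟩ := birkhoff_family_S4_p6_general p hp.isPrimePow
  exact ⟨hB, hA, fun a _ => hindec a, fun a b ha hb hab h =>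
    hab (((hiso a b).1 h).eq_of_lt_of_lt ha hb)⟩
end
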